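/- arXiv:1312.5401 — 3 statements merged into one kernel-verified Lean document; each statement's English description precedes it below -/
import Mathlib

section
/- Let M be a 3-connected matroid and let F_1 = (e_1, ..., e_n) be a fan of M with n >= 5. Let e_i be a rim element of F_1 with 1 <= i <= n−1. Then F_2 = (e_1, ..., e_{i−1}, e_{i+2}, ..., e_n) is a fan of M / e_i \ e_{i+1}, and for all j, e_j is a spoke element of F_1 if and only if it is a spoke element of F_2. -/
/-!
The matroid `M` is used only through two consequences of 3-connectedness: any two elements are
independent in `M` and in `M✶` (`ThreeConn.pairsIndep`, `ThreeConn.pairsIndep_dual`).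

Write `N = M / x \ y`. A set `{p, q, r}` avoiding `x` and `y` is a triangle of `N` as soon as
`{x, p, q, r}` is dependent in `M` while `x` together with any two of `p, q, r` is independent
(`isTriangle_minor`). This is applied in three situations.

* `IsTriangle.minor_of_far`: a triangle of `M` disjoint from some triad through `x` stays a
  triangle, by orthogonality of circuits and cocircuits.
* `minor_of_near` and `minor_of_straddle`: for triangles `{a, b, c}`, `{c, d, e}` and a triad
  `{b, c, d}`, the set `{a, b, c}` is a triangle of `M / d \ e`, and `{a, d, e}` is a triangle of
  `M / b \ c`. If not, the five elements would lie on a line, but `{a, d, e}` is independent by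
  orthogonality with the triad (`not_on_line`).

Since `(M / x \ y)✶ = M✶ / y \ x`, the same three lemmas in `M✶`, with the fan read backwards,
handle the triads. Every triple of consecutive elements of the shortened fan falls into one of
these cases.
-/

open Matroid Set

universe u

variable {α : Type u}

namespace PaperDefs

/-- Deletion of a set of elements from a matroid. -/
def mdel (M : Matroid α) (D : Set α) : Matroid α := M ↾ (M.E \ D)

/-- Contraction of a set of elements in a matroid. -/
def mcon (M : Matroid α) (C : Set α) : Matroid α := (mdel M✶ C)✶

/-- A circuit: a minimal dependent set. -/
def IsCircuit (M : Matroid α) (C : Set α) : Prop :=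
  M.Dep C ∧ ∀ X, X ⊂ C → M.Indep X

/-- A triangle: a 3-element circuit. -/
def IsTriangle (M : Matroid α) (T : Set α) : Prop :=
  IsCircuit M T ∧ T.encard = 3

/-- A triad: a 3-element cocircuit. -/
def IsTriad (M : Matroid α) (T : Set α) : Prop := IsTriangle M✶ T

/-- The (extended natural number) rank of a set in a matroid: the supremum of the
cardinalities of its independent subsets. -/
noncomputable def erk (M : Matroid α) (X : Set α) : ℕ∞ :=
  ⨆ I ∈ {I : Set α | M.Indep I ∧ I ⊆ X}, I.encard

/-- Two elements are connected if they are equal or lie in a common circuit. -/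
def ConnTo (M : Matroid α) (e f : α) : Prop :=
  (e = f ∧ e ∈ M.E) ∨ ∃ C, IsCircuit M C ∧ e ∈ C ∧ f ∈ C

/-- A matroid is connected if its ground set is nonempty and every two of its elements
are connected. -/
def Conn (M : Matroid α) : Prop :=
  M.E.Nonempty ∧ ∀ e ∈ M.E, ∀ f ∈ M.E, ConnTo M e f

/-- A 2-separation of a matroid: a partition `(X, Y)` of the ground set with both sides
of size at least two and `r(X) + r(Y) - r(M) ≤ 1`. -/
def TwoSep (M : Matroid α) (X Y : Set α) : Prop :=
  X ∪ Y = M.E ∧ Disjoint X Y ∧ 2 ≤ X.encard ∧ 2 ≤ Y.encard ∧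
    erk M X + erk M Y ≤ erk M M.E + 1

/-- A matroid is 3-connected if it is connected and has no 2-separation. -/
def ThreeConn (M : Matroid α) : Prop :=
  Conn M ∧ ∀ X Y, ¬ TwoSep M X Y

/-- A matroid is 3-connected up to series and parallel sets if it is connected and, for
every 2-separation `(X, Y)`, `min {r X, r Y} = 1` or `min {r✶ X, r✶ Y} = 1`. -/
def ThreeConnUpToSP (M : Matroid α) : Prop :=
  Conn M ∧ ∀ X Y, TwoSep M X Y →
    min (erk M X) (erk M Y) = 1 ∨ min (erk M✶ X) (erk M✶ Y) = 1

/-- `N` is a minor of `M`: it is obtained from `M` by contracting a set `C` and deleting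
a disjoint set `D`. -/
def IsMinor (N M : Matroid α) : Prop :=
  ∃ C D, C ⊆ M.E ∧ D ⊆ M.E ∧ Disjoint C D ∧ N = mdel (mcon M C) D

/-- `M` is isomorphic to `N`: there is a bijection between the ground sets under which
independence corresponds. -/
def IsoTo (M N : Matroid α) : Prop :=
  ∃ f : α → α, Set.BijOn f M.E N.E ∧ ∀ I, I ⊆ M.E → (M.Indep I ↔ N.Indep (f '' I))

/-- The cyclic interval `{i, i+1, ..., j-1}` in `ZMod r`. -/
def cycArc (r : ℕ) (i j : ZMod r) : Set (ZMod r) :=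
  {k | ∃ m : ℕ, m < (j - i).val ∧ k = i + (m : ZMod r)}

/-- `M` is (isomorphic to) a rank-`r` wheel for some `r ≥ 2`, i.e. the cycle matroid of
the wheel graph with `r` spokes: there is a labelling of the ground set by spokes `s i`
and rim elements `w i` so that the circuits of `M` are precisely the rim together with
the sets consisting of two spokes and the rim elements of one of the two arcs joining
them. -/
def IsWheel (M : Matroid α) : Prop :=
  ∃ r : ℕ, 2 ≤ r ∧ ∃ s w : ZMod r → α,
    Function.Injective (Sum.elim s w) ∧
    M.E = Set.range s ∪ Set.range w ∧
    ∀ C, IsCircuit M C ↔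
      (C = Set.range w ∨
        ∃ i j : ZMod r, i ≠ j ∧ C = {s i, s j} ∪ w '' cycArc r i j)

/-- `M` is (isomorphic to) a rank-`r` whirl for some `r ≥ 2`: obtained from the rank-`r`
wheel by relaxing the rim circuit; its circuits are the two-spokes-plus-arc circuits of
the wheel together with the sets consisting of the whole rim and a single spoke. -/
def IsWhirl (M : Matroid α) : Prop :=
  ∃ r : ℕ, 2 ≤ r ∧ ∃ s w : ZMod r → α,
    Function.Injective (Sum.elim s w) ∧
    M.E = Set.range s ∪ Set.range w ∧
    ∀ C, IsCircuit M C ↔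
      ((∃ i : ZMod r, C = insert (s i) (Set.range w)) ∨
        ∃ i j : ZMod r, i ≠ j ∧ C = {s i, s j} ∪ w '' cycArc r i j)

/-- A triangle if `b = true`, a triad if `b = false`. -/
def TriOrTriad (M : Matroid α) (b : Bool) (T : Set α) : Prop :=
  cond b (IsTriangle M T) (IsTriad M T)

/-- The alternation pattern of a fan, recorded as a list: position `i` (zero-based)
carries a spoke element iff `fanBool b i = true`, where `b` records whether the first
triple of the fan is a triangle. -/
def fanBool (b : Bool) (i : ℕ) : Bool := if i % 2 = 0 then b else !b

/-- `F` is a fan of `M` whose first triple is a triangle if `b = true` (so that the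
first element is a spoke element) and a triad if `b = false`: a list of at least three
distinct elements of the ground set in which every three consecutive elements form
alternately triangles and triads. -/
def IsFanWith (M : Matroid α) (b : Bool) (F : List α) : Prop :=
  3 ≤ F.length ∧ F.Nodup ∧ (∀ x ∈ F, x ∈ M.E) ∧
  ∀ (l₁ : List α) (x y z : α) (l₂ : List α), F = l₁ ++ x :: y :: z :: l₂ →
    TriOrTriad M (fanBool b l₁.length) {x, y, z}

/-- `F` is a fan of `M`. -/
def IsFan (M : Matroid α) (F : List α) : Prop := ∃ b, IsFanWith M b F

/-- `F` is consistent with `F'`: `F` is a (not necessarily contiguous) subsequence of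
`F'` or of its reversal. -/
def Consistent (F F' : List α) : Prop := F.Sublist F' ∨ F.Sublist F'.reverse

/-- A finite family of lists is pairwise disjoint. -/
def PairwiseDisjointLists (𝓕 : Finset (List α)) : Prop :=
  ∀ F ∈ 𝓕, ∀ G ∈ 𝓕, F ≠ G → ∀ x ∈ F, x ∉ G

/-- `𝓕` is a covering family of `M'` relative to `N` and `FN`: a family of pairwise
disjoint fans of `M'`, of the same size as `FN`, such that every fan of `FN` is
consistent with a member of `𝓕` and every element of `E(M') - E(N)` lies in a member
of `𝓕`. -/
def CoveringFamily (N : Matroid α) (FN : Finset (List α)) (M' : Matroid α)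
    (𝓕 : Finset (List α)) : Prop :=
  (∀ F ∈ 𝓕, IsFan M' F) ∧ PairwiseDisjointLists 𝓕 ∧ 𝓕.card = FN.card ∧
  (∀ F ∈ FN, ∃ F' ∈ 𝓕, Consistent F F') ∧
  (∀ x ∈ M'.E \ N.E, ∃ F ∈ 𝓕, x ∈ F)

/-- `M` is obtained from `M'` by a fan-lengthening move on the fan `F₀` of `M'`,
producing the fan `F` of `M`: either `M' = M \ e₁` where `e₁` is a terminal spoke
element of `F`, or `M' = M / e₁` where `e₁` is a terminal rim element of `F`, or
(when `F` has at least five elements) `M' = M / eᵢ \ eᵢ₊₁` for a rim element `eᵢ`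
of `F` with `1 ≤ i ≤ n - 1`; in each case `M` and `M'` are 3-connected and `F₀` is
the corresponding shortened fan. -/
def FanLengthen (M' M : Matroid α) (F₀ F : List α) : Prop :=
  ThreeConn M ∧ 4 ≤ F.length ∧ IsFan M' F₀ ∧
  ∃ b, IsFanWith M b F ∧
    ((∃ e F', F = e :: F' ∧ b = true ∧ M' = mdel M {e} ∧ ThreeConn M' ∧ F₀ = F') ∨
     (∃ e F', F = e :: F' ∧ b = false ∧ M' = mcon M {e} ∧ ThreeConn M' ∧ F₀ = F') ∨
     (5 ≤ F.length ∧ ∃ (l₁ : List α) (x y : α) (l₂ : List α),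
        F = l₁ ++ x :: y :: l₂ ∧ fanBool b l₁.length = false ∧
        M' = mdel (mcon M {x}) {y} ∧ ThreeConn M' ∧ F₀ = l₁ ++ l₂))

/-- The fan-extensions of `N` relative to the family `FN` of fans of `N`: the smallest
collection of matroids containing `N` and closed under fan-lengthening moves performed
on fans belonging to covering families. -/
inductive FanExt (N : Matroid α) (FN : Finset (List α)) : Matroid α → Prop
  | base : FanExt N FN N
  | step (M' M : Matroid α) (𝓕 : Finset (List α)) (F₀ F : List α) :
      FanExt N FN M' → CoveringFamily N FN M' 𝓕 → F₀ ∈ 𝓕 →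
      FanLengthen M' M F₀ F → FanExt N FN M

/-- The covering family `𝓕` of `M` admits a fan-shortening move: there are a matroid
`M'` having `N` as a minor and a fan `F₀` of `M'` such that `M` is obtained from `M'`
by a fan-lengthening move on `F₀` producing a fan that belongs to `𝓕`. -/
def AdmitsFanShortening (N M : Matroid α) (𝓕 : Finset (List α)) : Prop :=
  ∃ (M' : Matroid α) (F₀ F : List α), IsMinor N M' ∧ F ∈ 𝓕 ∧ FanLengthen M' M F₀ F

/-- The alternation pattern of a fan presented as a function with one-based indices:
position `i` carries a spoke element iff `posBool b i = true`, where `b` records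
whether the first triple of the fan is a triangle. -/
def posBool (b : Bool) (i : ℕ) : Bool := if i % 2 = 1 then b else !b

/-- `(e 1, ..., e n)` is a fan of `M` whose first triple is a triangle if `b = true`
(so that `e 1` is a spoke element) and a triad if `b = false`: at least three distinct
elements of the ground set in which every three consecutive elements form alternately
triangles and triads. -/
def IsFanFun (M : Matroid α) (b : Bool) (n : ℕ) (e : ℕ → α) : Prop :=
  3 ≤ n ∧ (∀ i j, 1 ≤ i → i ≤ n → 1 ≤ j → j ≤ n → e i = e j → i = j) ∧
  (∀ i, 1 ≤ i → i ≤ n → e i ∈ M.E) ∧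
  ∀ i, 1 ≤ i → i + 2 ≤ n → TriOrTriad M (posBool b i) {e i, e (i+1), e (i+2)}

/-- The set of elements of the fan `(e 1, ..., e n)`. -/
def fanSet (n : ℕ) (e : ℕ → α) : Set α := {a | ∃ i, 1 ≤ i ∧ i ≤ n ∧ a = e i}

/-- The set of rim elements of the fan `(e 1, ..., e n)` with alternation pattern `b`. -/
def rimSet (b : Bool) (n : ℕ) (e : ℕ → α) : Set α :=
  {a | ∃ i, 1 ≤ i ∧ i ≤ n ∧ posBool b i = false ∧ a = e i}

/-- `M` is representable over the field `𝔽`. -/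
def RepOver (M : Matroid α) (𝔽 : Type*) [Field 𝔽] : Prop :=
  ∃ f : α → (α → 𝔽),
    ∀ I : Set α, I ⊆ M.E → (M.Indep I ↔ LinearIndependent 𝔽 (fun x : I => f (x : α)))

/-- `M` has a minor isomorphic to a member of `𝓢`. -/
def HasSMinor (𝓢 : Set (Matroid α)) (M : Matroid α) : Prop :=
  ∃ S ∈ 𝓢, ∃ N, IsMinor N M ∧ IsoTo N S

/-- `M` is `𝓢`-fragile: for every element `e` of `M`, at least one of `M \ e` and
`M / e` has no `𝓢`-minor. -/
def SFragile (𝓢 : Set (Matroid α)) (M : Matroid α) : Prop :=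
  ∀ e ∈ M.E, ¬ HasSMinor 𝓢 (mdel M {e}) ∨ ¬ HasSMinor 𝓢 (mcon M {e})

end PaperDefs

open PaperDefs

namespace FanShortening

/-- Any two (possibly equal) elements of `M` form an independent set; that is, `M` is simple. -/
def PairsIndep (M : Matroid α) : Prop := ∀ x ∈ M.E, ∀ y ∈ M.E, M.Indep {x, y}

lemma isCircuit_iff {M : Matroid α} {C : Set α} : PaperDefs.IsCircuit M C ↔ M.IsCircuit C := by
  rw [isCircuit_iff_forall_ssubset, PaperDefs.IsCircuit]

lemma erk_eq (M : Matroid α) (X : Set α) : erk M X = M.eRk X := by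
  refine le_antisymm (iSup₂_le fun I hI => hI.1.encard_le_eRk_of_subset hI.2) ?_
  obtain ⟨I, hIX, hI, hc⟩ := (le_eRk_iff (M := M) (X := X)).1 le_rfl
  rw [← hc]
  exact le_iSup₂_of_le I ⟨hI, hIX⟩ le_rfl

lemma encard_pair_le (u v : α) : ({u, v} : Set α).encard ≤ 2 := by
  have := encard_insert_le {v} u
  rwa [encard_singleton, one_add_one_eq_two] at this

lemma dual_minor (M : Matroid α) {x y : α} (h : x ≠ y) :
    (mdel (mcon M {x}) {y})✶ = mdel (mcon M✶ {y}) {x} := by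
  change (M ／ {x} ＼ {y})✶ = M✶ ／ {y} ＼ {x}
  rw [dual_contract_delete, contract_delete_comm _ (by simpa using h.symm)]

/-! ### Consequences of 3-connectedness -/

/-- In a 3-connected matroid with at least four elements, no pair of distinct elements is one
side of a 2-separation. -/
lemma not_small_sep {M : Matroid α} (hM : ThreeConn M) (hE : 4 ≤ M.E.encard) {x y : α}
    (hx : x ∈ M.E) (hy : y ∈ M.E) (hxy : x ≠ y) :
    ¬ (M.eRk {x, y} + M.eRk (M.E \ {x, y}) ≤ M.eRk M.E + 1) := by
  intro h
  have hsub : {x, y} ⊆ M.E := by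
    rintro z (rfl | rfl) <;> assumption
  have hc : ({x, y} : Set α).encard = 2 := encard_pair hxy
  refine hM.2 {x, y} (M.E \ {x, y}) ⟨union_sdiff_cancel hsub, disjoint_sdiff_right, hc.ge, ?_, ?_⟩
  · have := encard_sdiff_add_encard_of_subset hsub
    rw [hc] at this
    rw [← this] at hE
    exact (ENat.add_le_add_iff_right (k := 2) (by decide)).1 hE
  · simpa only [erk_eq] using h

lemma ThreeConn.pairsIndep {M : Matroid α} (hM : ThreeConn M) (hE : 4 ≤ M.E.encard) :
    PairsIndep M := by
  have key : ∀ x ∈ M.E, ∀ y ∈ M.E, x ≠ y → M.Indep {x, y} := by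
    intro x hx y hy hxy
    by_contra hcon
    have hd : M.Dep {x, y} := (not_indep_iff (by rintro z (rfl | rfl) <;> assumption)).1 hcon
    have h1 := eRk_lt_encard_of_dep_of_finite (by simp) hd
    rw [encard_pair hxy] at h1
    have h2 : M.eRk {x, y} ≤ 1 := Order.le_of_lt_add_one h1
    refine not_small_sep hM hE hx hy hxy ?_
    rw [add_comm]
    exact add_le_add (M.eRk_mono sdiff_subset) h2
  intro x hx y hy
  by_cases hxy : x = y
  · subst hxy
    obtain ⟨z, hz, hzx⟩ : ∃ z ∈ M.E, z ≠ x :=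
      exists_ne_of_one_lt_encard (lt_of_lt_of_le (by decide) hE) x
    exact (key x hx z hz hzx.symm).subset (by simp)
  · exact key x hx y hy hxy

lemma ThreeConn.pairsIndep_dual {M : Matroid α} (hM : ThreeConn M) (hE : 4 ≤ M.E.encard) :
    PairsIndep M✶ := by
  have key : ∀ x ∈ M.E, ∀ y ∈ M.E, x ≠ y → M✶.Indep {x, y} := by
    intro x hx y hy hxy
    by_contra hcon
    have hns : ¬ M.Spanning (M.E \ {x, y}) := fun h =>
      hcon ((coindep_iff_compl_spanning (by rintro z (rfl | rfl) <;> assumption)).2 h)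
    -- A non-spanning set can be enlarged, so its rank is at least one below that of `M`.
    have h1 : M.eRk (M.E \ {x, y}) + 1 ≤ M.eRk M.E := by
      rw [spanning_iff_ground_subset_closure sdiff_subset, not_subset] at hns
      obtain ⟨z, hz, hz'⟩ := hns
      rw [← eRk_insert_eq_add_one ⟨hz, hz'⟩]
      exact M.eRk_mono (insert_subset hz sdiff_subset)
    refine not_small_sep hM hE hx hy hxy ?_
    have h2 : M.eRk {x, y} ≤ 1 + 1 := by
      have := M.eRk_le_encard {x, y}
      rwa [encard_pair hxy, ← one_add_one_eq_two] at this
    calc M.eRk {x, y} + M.eRk (M.E \ {x, y}) ≤ (1 + 1) + M.eRk (M.E \ {x, y}) := by gcongr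
      _ = (M.eRk (M.E \ {x, y}) + 1) + 1 := by ring
      _ ≤ _ := by gcongr
  intro x hx y hy
  by_cases hxy : x = y
  · subst hxy
    obtain ⟨z, hz, hzx⟩ : ∃ z ∈ M.E, z ≠ x :=
      exists_ne_of_one_lt_encard (lt_of_lt_of_le (by decide) hE) x
    exact (key x hx z hz hzx.symm).subset (by simp)
  · exact key x hx y hy hxy

/-! ### Triangles, triads and the minor `M / x \ y` -/

lemma IsTriangle.mem_closure {M : Matroid α} {p q r : α} {X : Set α}
    (h : IsTriangle M {p, q, r}) (hp : p ∈ M.closure X) (hq : q ∈ M.closure X) :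
    r ∈ M.closure X := by
  have h1 := (isCircuit_iff.1 h.1).mem_closure_sdiff_singleton_of_mem (e := r) (by simp)
  refine (M.closure_subset_closure_of_subset_closure ?_) h1
  rintro z ⟨rfl | rfl | rfl, hz⟩
  · exact hp
  · exact hq
  · exact absurd rfl hz

lemma IsTriangle.indep_pair {M : Matroid α} {T : Set α} {p q : α} (h : IsTriangle M T)
    (hp : p ∈ T) (hq : q ∈ T) : M.Indep {p, q} := by
  have hsub : {p, q} ⊆ T := by rintro z (rfl | rfl) <;> assumption
  refine h.1.2 _ (hsub.ssubset_of_ne ?_)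
  rintro rfl
  have h2 := encard_pair_le p q
  rw [h.2] at h2
  exact absurd h2 (by decide)

lemma IsTriangle.subset_ground {M : Matroid α} {T : Set α} (h : IsTriangle M T) : T ⊆ M.E :=
  h.1.1.subset_ground

/-- Orthogonality: an element of a triad can be added to any independent set avoiding the triad. -/
lemma IsTriad.insert_indep {M : Matroid α} {K I : Set α} {x : α} (hK : IsTriad M K) (hx : x ∈ K)
    (hI : M.Indep I) (hd : ∀ z ∈ I, z ∉ K) : M.Indep (insert x I) := by
  have hK' : M.IsCocircuit K := isCircuit_iff.1 hK.1
  by_contra hcon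
  have hxI : x ∉ I := fun h => hd x h hx
  have hcl : x ∈ M.closure I := by
    rw [hI.insert_indep_iff_of_notMem hxI] at hcon
    by_contra h
    exact hcon ⟨hK'.subset_ground hx, h⟩
  obtain ⟨C, hCI, hC, hxC⟩ := exists_isCircuit_of_mem_closure hcl hxI
  refine hC.inter_isCocircuit_ne_singleton hK' (e := x) ?_
  ext z
  constructor
  · rintro ⟨hzC, hzK⟩
    rcases hCI hzC with rfl | hz
    · rfl
    · exact absurd hzK (hd z hz)
  · rintro rfl
    exact ⟨hxC, hx⟩

/-- A criterion for `{p, q, r}` to be a triangle of `M / x \ y`. -/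
lemma isTriangle_minor {M : Matroid α} {x y p q r : α} (hnd : [x, y, p, q, r].Nodup)
    (hdep : M.Dep {x, p, q, r}) (h1 : M.Indep {x, p, q}) (h2 : M.Indep {x, p, r})
    (h3 : M.Indep {x, q, r}) : IsTriangle (mdel (mcon M {x}) {y}) {p, q, r} := by
  simp only [List.nodup_cons, List.mem_cons, List.not_mem_nil, or_false, not_or, not_false_eq_true,
    List.nodup_nil, and_true] at hnd
  obtain ⟨⟨hxy, hxp, hxq, hxr⟩, ⟨hyp, hyq, hyr⟩, ⟨hpq, hpr⟩, hqr⟩ := hnd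
  have hxl : M.IsNonloop x := by
    rw [← indep_singleton]
    exact h1.subset (by simp)
  have hind : ∀ I : Set α, (mdel (mcon M {x}) {y}).Indep I ↔
      (x ∉ I ∧ M.Indep (insert x I)) ∧ y ∉ I := by
    intro I
    change (M ／ {x} ＼ {y}).Indep I ↔ _
    rw [delete_indep_iff, hxl.contractElem_indep_iff, disjoint_singleton_right]
  have hE : (mdel (mcon M {x}) {y}).E = (M.E \ {x}) \ {y} := rfl
  have hsub := hdep.subset_ground
  simp only [insert_subset_iff, singleton_subset_iff] at hsub
  refine ⟨⟨?_, ?_⟩, ?_⟩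
  · rw [dep_iff, hind, hE]
    refine ⟨fun h => hdep.not_indep h.1.2, ?_⟩
    rintro z (rfl | rfl | rfl)
    · exact ⟨⟨hsub.2.1, Ne.symm hxp⟩, Ne.symm hyp⟩
    · exact ⟨⟨hsub.2.2.1, Ne.symm hxq⟩, Ne.symm hyq⟩
    · exact ⟨⟨hsub.2.2.2, Ne.symm hxr⟩, Ne.symm hyr⟩
  · intro X hX
    rw [hind]
    have hxX : x ∉ X := fun h => by
      have := hX.subset h
      simp [hxp, hxq, hxr] at this
    have hyX : y ∉ X := fun h => by
      have := hX.subset h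
      simp [hyp, hyq, hyr] at this
    refine ⟨⟨hxX, ?_⟩, hyX⟩
    obtain ⟨z, hz, hzX⟩ := exists_of_ssubset hX
    have hXz : ∀ w ∈ X, w ≠ z ∧ (w = p ∨ w = q ∨ w = r) := fun w hw =>
      ⟨fun h => hzX (h ▸ hw), by simpa using hX.subset hw⟩
    rcases hz with rfl | rfl | rfl
    · refine h3.subset (insert_subset_insert fun w hw => ?_)
      have := hXz w hw
      simp only [mem_insert_iff, mem_singleton_iff]
      tauto
    · refine h2.subset (insert_subset_insert fun w hw => ?_)
      have := hXz w hw
      simp only [mem_insert_iff, mem_singleton_iff]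
      tauto
    · refine h1.subset (insert_subset_insert fun w hw => ?_)
      have := hXz w hw
      simp only [mem_insert_iff, mem_singleton_iff]
      tauto
  · exact encard_eq_three.2 ⟨p, q, r, hpq, hpr, hqr, rfl⟩

/-- A triangle disjoint from a triad through `x` survives in `M / x \ y`. -/
lemma IsTriangle.minor_of_far {M : Matroid α} {x y p q r : α} {K : Set α}
    (hnd : [x, y, p, q, r].Nodup) (hT : IsTriangle M {p, q, r}) (hK : IsTriad M K) (hx : x ∈ K)
    (hp : p ∉ K) (hq : q ∉ K) (hr : r ∉ K) :
    IsTriangle (mdel (mcon M {x}) {y}) {p, q, r} := by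
  have hxE : x ∈ M.E := IsTriangle.subset_ground hK hx
  refine isTriangle_minor hnd
    (hT.1.1.superset (subset_insert _ _) (insert_subset hxE hT.1.1.subset_ground)) ?_ ?_ ?_
  · exact IsTriad.insert_indep hK hx (IsTriangle.indep_pair hT (by simp) (by simp))
      (by rintro z (rfl | rfl) <;> assumption)
  · exact IsTriad.insert_indep hK hx (IsTriangle.indep_pair hT (by simp) (by simp))
      (by rintro z (rfl | rfl) <;> assumption)
  · exact IsTriad.insert_indep hK hx (IsTriangle.indep_pair hT (by simp) (by simp))
      (by rintro z (rfl | rfl) <;> assumption)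

/-- In a five-element fan `(a, b, c, d, e)` whose middle triple `{b, c, d}` is a triad, the set
`{a, d, e}` has rank three, so it is not contained in a line. -/
lemma not_on_line {M : Matroid α} (hs : PairsIndep M) {a b c d e u v : α}
    (hnd : [a, b, c, d, e].Nodup) (hK : IsTriad M {b, c, d}) (ha : a ∈ M.closure {u, v})
    (hd : d ∈ M.closure {u, v}) (he : e ∈ M.closure {u, v}) : False := by
  simp only [List.nodup_cons, List.mem_cons, List.not_mem_nil, or_false, not_or, not_false_eq_true,
    List.nodup_nil, and_true] at hnd
  obtain ⟨⟨hab, hac, had, hae⟩, ⟨hbc, hbd, hbe⟩, ⟨hcd, hce⟩, hde⟩ := hnd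
  have hi : M.Indep {d, a, e} := by
    refine IsTriad.insert_indep hK (by simp)
      (hs a (mem_ground_of_mem_closure ha) e (mem_ground_of_mem_closure he)) ?_
    rintro z (rfl | rfl)
    · simp [hab, hac, had]
    · simp [Ne.symm hbe, Ne.symm hce, Ne.symm hde]
  have h1 := hi.encard_le_eRk_of_subset (X := M.closure {u, v})
    (by rintro z (rfl | rfl | rfl) <;> assumption)
  rw [eRk_closure_eq, encard_eq_three.2 ⟨d, a, e, Ne.symm had, hde, hae, rfl⟩] at h1
  have h2 := (h1.trans (M.eRk_le_encard _)).trans (encard_pair_le u v)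
  exact absurd h2 (by decide)

lemma indep_insert_pair {M : Matroid α} {x p q : α} (hx : x ∈ M.E) (hpq : M.Indep {p, q})
    (h : x ∉ M.closure {p, q}) : M.Indep {x, p, q} :=
  hpq.insert_indep_iff.2 (Or.inl ⟨hx, h⟩)

lemma minor_of_near {M : Matroid α} (hs : PairsIndep M) {a b c d e : α}
    (hnd : [a, b, c, d, e].Nodup) (h1 : IsTriangle M {a, b, c}) (hK : IsTriad M {b, c, d})
    (h2 : IsTriangle M {c, d, e}) : IsTriangle (mdel (mcon M {d}) {e}) {a, b, c} := by
  have hdE : d ∈ M.E := h2.1.1.subset_ground (by simp)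
  have hpair : ∀ p ∈ ({a, b, c} : Set α), ∀ q ∈ ({a, b, c} : Set α), M.Indep {p, q} :=
    fun p hp q hq => IsTriangle.indep_pair h1 hp hq
  have hmem : ∀ p ∈ ({a, b, c} : Set α), ∀ q ∈ ({a, b, c} : Set α),
      p ∈ M.closure {p, q} ∧ q ∈ M.closure {p, q} := fun p hp q hq =>
    ⟨M.mem_closure_of_mem (by simp) (hpair p hp q hq).subset_ground,
      M.mem_closure_of_mem (by simp) (hpair p hp q hq).subset_ground⟩
  -- If `d` lay on the line of `{a, b, c}`, then so would `e`.
  have hno : ∀ p q, a ∈ M.closure {p, q} → c ∈ M.closure {p, q} → d ∉ M.closure {p, q} :=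
    fun p q ha hc hd => not_on_line hs hnd hK ha hd (IsTriangle.mem_closure h2 hc hd)
  refine isTriangle_minor (by simp at hnd ⊢; tauto)
    (h1.1.1.superset (subset_insert _ _) (insert_subset hdE h1.1.1.subset_ground)) ?_ ?_ ?_
  · have hm := hmem a (by simp) b (by simp)
    exact indep_insert_pair hdE (hpair a (by simp) b (by simp))
      (hno a b hm.1 (IsTriangle.mem_closure h1 hm.1 hm.2))
  · have hm := hmem a (by simp) c (by simp)
    exact indep_insert_pair hdE (hpair a (by simp) c (by simp)) (hno a c hm.1 hm.2)
  · have hm := hmem b (by simp) c (by simp)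
    have h1' : IsTriangle M {b, c, a} := by
      rwa [show ({b, c, a} : Set α) = {a, b, c} by ext; simp; tauto]
    exact indep_insert_pair hdE (hpair b (by simp) c (by simp))
      (hno b c (IsTriangle.mem_closure h1' hm.1 hm.2) hm.2)

lemma minor_of_straddle {M : Matroid α} (hs : PairsIndep M) {a b c d e : α}
    (hnd : [a, b, c, d, e].Nodup) (h1 : IsTriangle M {a, b, c}) (hK : IsTriad M {b, c, d})
    (h2 : IsTriangle M {c, d, e}) : IsTriangle (mdel (mcon M {b}) {c}) {a, d, e} := by
  have h1s := IsTriangle.subset_ground h1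
  have h2s := IsTriangle.subset_ground h2
  simp only [insert_subset_iff, singleton_subset_iff] at h1s h2s
  obtain ⟨ha, hb, hc⟩ := h1s
  obtain ⟨-, hd, he⟩ := h2s
  have h1' : IsTriangle M {b, c, a} := by
    rwa [show ({b, c, a} : Set α) = {a, b, c} by ext; simp; tauto]
  have h1'' : IsTriangle M {a, c, b} := by
    rwa [show ({a, c, b} : Set α) = {a, b, c} by ext; simp; tauto]
  have h2' : IsTriangle M {d, e, c} := by
    rwa [show ({d, e, c} : Set α) = {c, d, e} by ext; simp; tauto]
  have hsub3 : ({a, d, e} : Set α) ⊆ M.E := by rintro z (rfl | rfl | rfl) <;> assumption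
  have hmem : ∀ p ∈ M.E, ∀ q ∈ M.E, p ∈ M.closure {p, q} ∧ q ∈ M.closure {p, q} :=
    fun p hp q hq => ⟨M.mem_closure_of_mem (by simp) (hs p hp q hq).subset_ground,
      M.mem_closure_of_mem (by simp) (hs p hp q hq).subset_ground⟩
  have hnd' := hnd
  simp only [List.nodup_cons, List.mem_cons, List.not_mem_nil, or_false, not_or, not_false_eq_true,
    List.nodup_nil, and_true] at hnd'
  obtain ⟨⟨hab, hac, had, hae⟩, ⟨hbc, hbd, hbe⟩, ⟨hcd, hce⟩, hde⟩ := hnd'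
  refine isTriangle_minor (by simp at hnd ⊢; tauto) ?_ ?_ ?_ ?_
  · -- `c` is spanned by `{d, e}`, hence `b` is spanned by `{a, d, e}`.
    have hc' : c ∈ M.closure {a, d, e} := IsTriangle.mem_closure h2'
      (M.mem_closure_of_mem (by simp) hsub3) (M.mem_closure_of_mem (by simp) hsub3)
    have hb' : b ∈ M.closure {a, d, e} :=
      IsTriangle.mem_closure h1'' (M.mem_closure_of_mem (by simp) hsub3) hc'
    rw [← not_indep_iff (insert_subset hb hsub3)]
    intro hcon
    rw [insert_indep_iff] at hcon
    exact (hcon.2 (by simp [Ne.symm hab, hbd, hbe])).2 hb'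
  · refine indep_insert_pair hb (hs a ha d hd) fun hcl => ?_
    have hm := hmem a ha d hd
    have hc' := IsTriangle.mem_closure h1 hm.1 hcl
    exact not_on_line hs hnd hK hm.1 hm.2 (IsTriangle.mem_closure h2 hc' hm.2)
  · refine IsTriad.insert_indep hK (by simp) (hs a ha e he) ?_
    rintro z (rfl | rfl)
    · simp [hab, hac, had]
    · simp [Ne.symm hbe, Ne.symm hce, Ne.symm hde]
  · refine indep_insert_pair hb (hs d hd e he) fun hcl => ?_
    have hm := hmem d hd e he
    have hc' := IsTriangle.mem_closure h2' hm.1 hm.2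
    exact not_on_line hs hnd hK (IsTriangle.mem_closure h1' hcl hc') hm.1 hm.2

/-! ### The shortened fan -/

lemma posBool_eq_iff (b : Bool) (i j : ℕ) : posBool b i = posBool b j ↔ i % 2 = j % 2 := by
  have h1 := Nat.mod_two_eq_zero_or_one i
  have h2 := Nat.mod_two_eq_zero_or_one j
  rcases h1 with h1 | h1 <;> rcases h2 with h2 | h2 <;> cases b <;> simp [posBool, h1, h2]

lemma set_rev (x y z : α) : ({x, y, z} : Set α) = {z, y, x} := by
  ext
  simp
  tauto

end FanShortening

open FanShortening

/-- If `(e 1, ..., e n)` is a fan of the 3-connected matroid `M` with `n ≥ 5` and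
`e i` is a rim element with `1 ≤ i ≤ n - 1`, then
`(e 1, ..., e (i-1), e (i+2), ..., e n)` is a fan of `M / e i \ e (i+1)` with the same
partition into spoke and rim elements. -/
theorem statement9 (M : Matroid α) (hM3 : ThreeConn M) (b : Bool) (n : ℕ) (e : ℕ → α)
    (hfan : IsFanFun M b n e) (hn : 5 ≤ n)
    (i : ℕ) (hi1 : 1 ≤ i) (hin : i ≤ n - 1) (hrim : posBool b i = false) :
    IsFanFun (mdel (mcon M {e i}) {e (i+1)}) b (n - 2)
      (fun k => if k < i then e k else e (k + 2)) := by
  obtain ⟨-, hinj, hE, htri⟩ := hfan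
  have hne : ∀ p q, 1 ≤ p → p ≤ n → 1 ≤ q → q ≤ n → p ≠ q → e p ≠ e q :=
    fun p q h1 h2 h3 h4 h5 h => h5 (hinj p q h1 h2 h3 h4 h)
  have hnd : ∀ p q r s t, (1 ≤ p ∧ p ≤ n) → (1 ≤ q ∧ q ≤ n) → (1 ≤ r ∧ r ≤ n) →
      (1 ≤ s ∧ s ≤ n) → (1 ≤ t ∧ t ≤ n) → [p, q, r, s, t].Nodup →
      [e p, e q, e r, e s, e t].Nodup := by
    intro p q r s t hp hq hr hs ht h
    refine (List.nodup_map_iff_inj_on h (f := e)).2 fun x hx y hy hxy => ?_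
    have hbd : ∀ z ∈ [p, q, r, s, t], 1 ≤ z ∧ z ≤ n := by
      simp [hp, hq, hr, hs, ht]
    exact hinj x y (hbd x hx).1 (hbd x hx).2 (hbd y hy).1 (hbd y hy).2 hxy
  have hcard : 4 ≤ M.E.encard := by
    have hsub : e '' (Finset.Icc 1 4 : Finset ℕ) ⊆ M.E := by
      rintro _ ⟨k, hk, rfl⟩
      simp only [Finset.coe_Icc, mem_Icc] at hk
      exact hE k hk.1 (by omega)
    refine le_trans (le_of_eq ?_) (encard_le_encard hsub)
    rw [InjOn.encard_image, encard_coe_eq_coe_finsetCard]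
    · simp
    · intro x hx y hy hxy
      simp only [Finset.coe_Icc, mem_Icc] at hx hy
      exact hinj x y hx.1 (by omega) hy.1 (by omega) hxy
  have hs := ThreeConn.pairsIndep hM3 hcard
  have hs' := ThreeConn.pairsIndep_dual hM3 hcard
  have hii : e i ≠ e (i + 1) := hne _ _ (by omega) (by omega) (by omega) (by omega) (by omega)
  -- The triples starting at a position of the parity of `i` are triads, the others triangles.
  have hT : ∀ k, 1 ≤ k → k + 2 ≤ n → k % 2 ≠ i % 2 →
      IsTriangle M {e k, e (k + 1), e (k + 2)} := by
    intro k h1 h2 h3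
    have h4 : posBool b k = true := by
      rw [← Bool.not_eq_false, ← hrim, posBool_eq_iff]
      exact h3
    simpa [TriOrTriad, h4] using htri k h1 h2
  have hK : ∀ k, 1 ≤ k → k + 2 ≤ n → k % 2 = i % 2 →
      IsTriad M {e k, e (k + 1), e (k + 2)} := by
    intro k h1 h2 h3
    have h4 : posBool b k = false := by
      rw [← hrim, posBool_eq_iff]
      exact h3
    simpa [TriOrTriad, h4] using htri k h1 h2
  -- The triples of `M`, read backwards in `M✶`.
  have hTr : ∀ k, 1 ≤ k → k + 2 ≤ n → k % 2 ≠ i % 2 →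
      IsTriad M✶ {e (k + 2), e (k + 1), e k} := by
    intro k h1 h2 h3
    rw [IsTriad, dual_dual, set_rev]
    exact hT k h1 h2 h3
  have hKr : ∀ k, 1 ≤ k → k + 2 ≤ n → k % 2 = i % 2 →
      IsTriangle M✶ {e (k + 2), e (k + 1), e k} := by
    intro k h1 h2 h3
    rw [set_rev]
    exact hK k h1 h2 h3
  have hnm : ∀ p k, 1 ≤ p → p ≤ n → 1 ≤ k → k + 2 ≤ n → (p < k ∨ k + 2 < p) →
      e p ∉ ({e k, e (k + 1), e (k + 2)} : Set α) := by
    intro p k h1 h2 h3 h4 h5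
    simp only [mem_insert_iff, mem_singleton_iff, not_or]
    exact ⟨hne _ _ h1 h2 (by omega) (by omega) (by omega),
      hne _ _ h1 h2 (by omega) (by omega) (by omega),
      hne _ _ h1 h2 (by omega) (by omega) (by omega)⟩
  refine ⟨by omega, ?_, ?_, ?_⟩
  · intro p q hp hpn hq hqn h
    simp only at h
    split_ifs at h
    · exact hinj _ _ (by omega) (by omega) (by omega) (by omega) h
    · have := hinj _ _ (by omega) (by omega) (by omega) (by omega) h
      omega
    · have := hinj _ _ (by omega) (by omega) (by omega) (by omega) h
      omega
    · have := hinj _ _ (by omega) (by omega) (by omega) (by omega) h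
      omega
  · intro p hp hpn
    change _ ∈ (M.E \ {e i}) \ {e (i + 1)}
    simp only
    split_ifs
    · exact ⟨⟨hE _ (by omega) (by omega), hne _ _ (by omega) (by omega) (by omega) (by omega)
        (by omega)⟩, hne _ _ (by omega) (by omega) (by omega) (by omega) (by omega)⟩
    · exact ⟨⟨hE _ (by omega) (by omega), hne _ _ (by omega) (by omega) (by omega) (by omega)
        (by omega)⟩, hne _ _ (by omega) (by omega) (by omega) (by omega) (by omega)⟩
  · intro k hk hkn
    by_cases hpar : k % 2 = i % 2
    · have hb : posBool b k = false := by
        rw [← hrim, posBool_eq_iff]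
        exact hpar
      simp only [TriOrTriad, hb, cond_false]
      rw [IsTriad, dual_minor M hii]
      rcases lt_or_ge (k + 2) i with h | h
      · rw [if_pos (by omega), if_pos (by omega), if_pos (by omega)]
        obtain ⟨j, rfl⟩ : ∃ j, i = j + 1 := ⟨i - 1, by omega⟩
        refine IsTriangle.minor_of_far (hnd _ _ _ _ _ (by omega) (by omega) (by omega) (by omega)
          (by omega) (by simp; omega)) (hK k hk (by omega) hpar)
          (hTr j (by omega) (by omega) (by omega)) (by simp) ?_ ?_ ?_
        all_goals
          rw [set_rev]
          exact hnm _ _ (by omega) (by omega) (by omega) (by omega) (by omega)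
      rcases lt_or_ge k i with h' | h'
      · obtain rfl : i = k + 2 := by omega
        rw [if_pos (by omega), if_pos (by omega), if_neg (by omega), set_rev]
        exact minor_of_straddle hs' (hnd _ _ _ _ _ (by omega) (by omega) (by omega) (by omega)
          (by omega) (by simp; omega)) (hKr (k + 2) (by omega) (by omega) (by omega))
          (hTr (k + 1) (by omega) (by omega) (by omega)) (hKr k (by omega) (by omega) (by omega))
      · rw [if_neg (by omega), if_neg (by omega), if_neg (by omega), set_rev]
        rcases eq_or_lt_of_le h' with rfl | h''
        · exact minor_of_near hs' (hnd _ _ _ _ _ (by omega) (by omega) (by omega) (by omega)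
            (by omega) (by simp; omega)) (hKr (i + 2) (by omega) (by omega) (by omega))
            (hTr (i + 1) (by omega) (by omega) (by omega)) (hKr i (by omega) (by omega) (by omega))
        · refine IsTriangle.minor_of_far (hnd _ _ _ _ _ (by omega) (by omega) (by omega) (by omega)
            (by omega) (by simp; omega)) (hKr (k + 2) (by omega) (by omega) (by omega))
            (hTr (i + 1) (by omega) (by omega) (by omega)) (by simp) ?_ ?_ ?_
          all_goals
            rw [set_rev]
            exact hnm _ _ (by omega) (by omega) (by omega) (by omega) (by omega)
    · have hb : posBool b k = true := by
        rw [← Bool.not_eq_false, ← hrim, posBool_eq_iff]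
        exact hpar
      simp only [TriOrTriad, hb, cond_true]
      rcases lt_or_ge (k + 2) i with h | h
      · rw [if_pos (by omega), if_pos (by omega), if_pos (by omega)]
        rcases eq_or_lt_of_le (Nat.succ_le_of_lt h) with h' | h'
        · obtain rfl : i = k + 3 := by omega
          exact minor_of_near hs (hnd _ _ _ _ _ (by omega) (by omega) (by omega) (by omega)
            (by omega) (by simp; omega)) (hT k (by omega) (by omega) (by omega))
            (hK (k + 1) (by omega) (by omega) (by omega))
            (hT (k + 2) (by omega) (by omega) (by omega))
        · obtain ⟨j, rfl⟩ : ∃ j, i = j + 2 := ⟨i - 2, by omega⟩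
          refine IsTriangle.minor_of_far (hnd _ _ _ _ _ (by omega) (by omega) (by omega) (by omega)
            (by omega) (by simp; omega)) (hT k (by omega) (by omega) (by omega))
            (hK j (by omega) (by omega) (by omega)) (by simp) ?_ ?_ ?_
          all_goals
            exact hnm _ _ (by omega) (by omega) (by omega) (by omega) (by omega)
      rcases lt_or_ge k i with h' | h'
      · obtain rfl : i = k + 1 := by omega
        rw [if_pos (by omega), if_neg (by omega), if_neg (by omega)]
        exact minor_of_straddle hs (hnd _ _ _ _ _ (by omega) (by omega) (by omega) (by omega)
          (by omega) (by simp; omega)) (hT k (by omega) (by omega) (by omega))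
          (hK (k + 1) (by omega) (by omega) (by omega))
          (hT (k + 2) (by omega) (by omega) (by omega))
      · rw [if_neg (by omega), if_neg (by omega), if_neg (by omega)]
        refine IsTriangle.minor_of_far (hnd _ _ _ _ _ (by omega) (by omega) (by omega) (by omega)
          (by omega) (by simp; omega)) (hT (k + 2) (by omega) (by omega) (by omega))
          (hK i (by omega) (by omega) (by omega)) (by simp) ?_ ?_ ?_
        all_goals
          exact hnm _ _ (by omega) (by omega) (by omega) (by omega) (by omega)
end

section
/- Let (e_1, ..., e_n) be a fan in a 3-connected matroid M with n >= 4. Let e be an element of E(M) − {e_1, ..., e_n} such that there is a triangle T of M with e ∈ T ⊆ {e, e_1, ..., e_n}. Then one of the following holds: (i) T = {e, e_1, e_2}, e_1 is a rim element, and (e, e_1, ..., e_n) is a fan; (ii) T = {e, e_{n−1}, e_n}, e_n is a rim element, and (e_1, ..., e_n, e) is a fan; (iii) T = {e, e_1, e_n}, and e_1 and e_n are spoke elements; (iv) T = {e, e_2, e_4}, e_2 is a rim element, and n <= 5; (v) T = {e, e_{n−1}, e_{n−3}}, e_{n−1} is a rim element, and n <= 5. -/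
/-!
A circuit and a cocircuit never meet in exactly one element, so a triangle `T = {x, e p, e q}`
with `x` outside the fan meets each triad `{e (k-1), e k, e (k+1)}` of the fan in zero or two
elements (`fan_orthogonality`).

* If one of `e p`, `e q` is a spoke `e k` with `1 < k < n`, then the other one is an adjacent rim
  element, say `e (k+1)`. If `k + 2 ≤ n`, then eliminating `e (k+1)` from `T` and the fan triangle
  `{e k, e (k+1), e (k+2)}` gives the triangle `{x, e k, e (k+2)}`, since a 3-connected matroid
  with at least four elements has no parallel pairs. This triangle meets the triad around `e k` in
  `e k` only, a contradiction. So `k + 1 = n`, and `T` extends the fan at its end.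
* If one of them is a terminal spoke, it lies in no triad of the fan, so neither does the other.
  As `n ≥ 4`, every rim element is in such a triad, so the other is the second terminal spoke.
* If both are rim elements, every triad of the fan contains both or neither, which forces
  `{p, q} = {1, 3}` with `n = 4`, or `{p, q} = {2, 4}` with `n ≤ 5`.
-/

open Matroid Set

universe u

variable {α : Type u}

namespace PaperDefs

/-! ### Parallel pairs and circuit elimination -/

/-- The circuits of `PaperDefs` are circuits in the sense of Mathlib. -/
lemma IsCircuit.toMatroid {M : Matroid α} {C : Set α} (h : IsCircuit M C) : M.IsCircuit C := by
  refine ⟨h.1, fun D hD hDC => ?_⟩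
  by_contra hne
  exact hD.not_indep (h.2 D ⟨hDC, hne⟩)

/-- Two elements of a 3-connected matroid with at least four elements are not parallel: otherwise
the pair and its complement would form a 2-separation. -/
lemma ThreeConn.indep_pair {M : Matroid α} (h : ThreeConn M) {x y : α} (hx : x ∈ M.E)
    (hy : y ∈ M.E) (hxy : x ≠ y) (hbig : 2 ≤ (M.E \ {x, y}).encard) : M.Indep {x, y} := by
  by_contra hdep
  have hsub : ({x, y} : Set α) ⊆ M.E := by
    rintro z (rfl | rfl) <;> assumption
  refine h.2 {x, y} (M.E \ {x, y}) ⟨union_sdiff_cancel hsub, disjoint_sdiff_right,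
    (encard_pair hxy).ge, hbig, ?_⟩
  have h1 : erk M {x, y} ≤ 1 := by
    refine iSup₂_le fun I hI => ?_
    have hne : I ≠ {x, y} := by
      rintro rfl
      exact hdep hI.1
    have hlt : I.encard < ({x, y} : Set α).encard :=
      ((toFinite _).subset hI.2).encard_lt_encard (hI.2.ssubset_of_ne hne)
    rw [encard_pair hxy] at hlt
    exact Order.le_of_lt_add_one (by simpa [one_add_one_eq_two] using hlt)
  have h2 : erk M (M.E \ {x, y}) ≤ erk M M.E := by
    refine iSup₂_le fun I hI => ?_
    exact le_iSup₂_of_le (f := fun (I : Set α) (_ : I ∈ {I | M.Indep I ∧ I ⊆ M.E}) => I.encard)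
      I ⟨hI.1, hI.1.subset_ground⟩ le_rfl
  rw [add_comm]
  exact add_le_add h2 h1

/-- Eliminating `b` from the triangles `{x, a, b}` and `{a, b, c}` leaves a triangle when the
relevant pairs are independent. -/
lemma triangle_elim {M : Matroid α} {x a b c : α} (h1 : IsTriangle M {x, a, b})
    (h2 : IsTriangle M {a, b, c}) (hxa : x ≠ a) (hxb : x ≠ b) (hab : a ≠ b) (hac : a ≠ c)
    (hbc : b ≠ c) (hxc : x ≠ c) (ixa : M.Indep {x, a}) (ixc : M.Indep {x, c})
    (iac : M.Indep {a, c}) : IsTriangle M {x, a, c} := by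
  have hne : ({x, a, b} : Set α) ≠ {a, b, c} := by
    intro h
    have : x ∈ ({a, b, c} : Set α) := h ▸ (by simp)
    simp [hxa, hxb, hxc] at this
  obtain ⟨C, hC, hCc⟩ := h1.1.toMatroid.elimination h2.1.toMatroid hne b
  have hsub : C ⊆ {x, a, c} := by
    intro z hz
    have := hC hz
    simp only [mem_sdiff, mem_union, mem_insert_iff, mem_singleton_iff] at this ⊢
    tauto
  have hE : ({x, a, c} : Set α) ⊆ M.E := by
    rintro z (rfl | rfl | rfl)
    · exact ixa.subset_ground (by simp)
    · exact ixa.subset_ground (by simp)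
    · exact ixc.subset_ground (by simp)
  refine ⟨⟨hCc.dep.superset hsub hE, fun X hX => ?_⟩, ?_⟩
  · obtain ⟨hXs, hXn⟩ := hX
    obtain ⟨z, hz, hzX⟩ := not_subset.mp hXn
    rcases hz with rfl | rfl | rfl
    · refine iac.subset fun w hw => ?_
      have := hXs hw
      grind
    · refine ixc.subset fun w hw => ?_
      have := hXs hw
      grind
    · refine ixa.subset fun w hw => ?_
      have := hXs hw
      grind
  · exact encard_eq_three.mpr ⟨x, a, c, hxa, hxc, hac, rfl⟩

/-! ### Orthogonality with the triads of a fan -/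

/-- If a triangle through `x` and two fan elements contains one element of the triad centred at
an interior spoke, then it contains a second one. -/
lemma fan_orthogonality {M : Matroid α} {b : Bool} {n : ℕ} {e : ℕ → α} (hfan : IsFanFun M b n e)
    {x : α} (hxF : x ∉ fanSet n e) {p q : ℕ} (hq : 1 ≤ q)
    (hq' : q ≤ n) (hT : IsTriangle M {x, e p, e q}) {k : ℕ} (hk : 2 ≤ k) (hk' : k + 1 ≤ n)
    (hb : posBool b k = true) (hpk : p + 1 = k ∨ p = k ∨ p = k + 1) :
    q + 1 = k ∨ q = k ∨ q = k + 1 := by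
  obtain ⟨-, hinj, -, htri⟩ := hfan
  by_contra hcon
  obtain ⟨m, rfl⟩ : ∃ m, k = m + 1 := ⟨k - 1, by omega⟩
  have hbm : posBool b m = false := by
    unfold posBool at *
    cases b <;> grind
  have h3 := htri m (by omega) (by omega)
  rw [hbm] at h3
  have h3' : IsTriangle M✶ {e m, e (m + 1), e (m + 2)} := h3
  have hco : M.IsCocircuit {e m, e (m + 1), e (m + 2)} := h3'.1.toMatroid
  refine hT.1.toMatroid.inter_isCocircuit_ne_singleton hco (e := e p) ?_
  have hxe : ∀ i, 1 ≤ i → i ≤ n → x ≠ e i := fun i h h' he => hxF ⟨i, h, h', he⟩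
  have key : ∀ i, m ≤ i → i ≤ m + 2 → e q ≠ e i := by
    intro i h h' he
    have := hinj q i hq hq' (by omega) (by omega) he
    omega
  have k1 := key m (by omega) (by omega)
  have k2 := key (m + 1) (by omega) (by omega)
  have k3 := key (m + 2) (by omega) (by omega)
  have x1 := hxe m (by omega) (by omega)
  have x2 := hxe (m + 1) (by omega) (by omega)
  have x3 := hxe (m + 2) (by omega) (by omega)
  have hpm : e p = e m ∨ e p = e (m + 1) ∨ e p = e (m + 2) := by
    rcases hpk with h | h | h
    · left; congr 1; omega
    · right; left; rw [h]
    · right; right; rw [h]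
  ext z
  simp only [mem_inter_iff, mem_insert_iff, mem_singleton_iff]
  constructor
  · rintro ⟨rfl | rfl | rfl, h2⟩
    · tauto
    · rfl
    · tauto
  · rintro rfl
    exact ⟨Or.inr (Or.inl rfl), hpm⟩

/-! ### Extending a fan by one element -/

/-- A triangle `{x, e 1, e 2}` extends the fan at its start when `e 1` is a rim element. -/
lemma IsFanFun.cons {M : Matroid α} {b : Bool} {n : ℕ} {e : ℕ → α} (hfan : IsFanFun M b n e)
    {x : α} (hx : x ∈ M.E) (hxF : x ∉ fanSet n e) (hT : IsTriangle M {x, e 1, e 2})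
    (hb : posBool b 1 = false) :
    IsFanFun M (!b) (n + 1) (fun k => if k = 1 then x else e (k - 1)) := by
  obtain ⟨hn, hinj, hE, htri⟩ := hfan
  have hxe : ∀ i, 1 ≤ i → i ≤ n → x ≠ e i := fun i h h' he => hxF ⟨i, h, h', he⟩
  obtain rfl : b = false := by simpa [posBool] using hb
  refine ⟨by omega, fun i j hi hi' hj hj' hij => ?_, fun i hi hi' => ?_, fun i hi hi' => ?_⟩
  · by_cases h1 : i = 1 <;> by_cases h2 : j = 1
    · omega
    · simp only [h1, h2, if_true, if_false] at hij
      exact absurd hij (hxe _ (by omega) (by omega))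
    · simp only [h1, h2, if_true, if_false] at hij
      exact absurd hij.symm (hxe _ (by omega) (by omega))
    · simp only [h1, h2, if_false] at hij
      have := hinj _ _ (by omega) (by omega) (by omega) (by omega) hij
      omega
  · by_cases h1 : i = 1
    · simpa [h1] using hx
    · simpa [h1] using hE (i - 1) (by omega) (by omega)
  · by_cases h1 : i = 1
    · subst h1
      simpa [posBool, TriOrTriad] using hT
    · obtain ⟨m, rfl⟩ : ∃ m, i = m + 1 := ⟨i - 1, by omega⟩
      have hm : m ≠ 0 := by omega
      have h3 := htri m (by omega) (by omega)
      have hpb : posBool (!false) (m + 1) = posBool false m := by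
        unfold posBool
        grind
      rw [hpb]
      simpa [hm] using h3

/-- A triangle `{x, e (n-1), e n}` extends the fan at its end when `e n` is a rim element. -/
lemma IsFanFun.snoc {M : Matroid α} {b : Bool} {n : ℕ} {e : ℕ → α} (hfan : IsFanFun M b n e)
    {x : α} (hx : x ∈ M.E) (hxF : x ∉ fanSet n e) (hT : IsTriangle M {x, e (n - 1), e n})
    (hb : posBool b n = false) :
    IsFanFun M b (n + 1) (fun k => if k = n + 1 then x else e k) := by
  obtain ⟨hn, hinj, hE, htri⟩ := hfan
  have hxe : ∀ i, 1 ≤ i → i ≤ n → x ≠ e i := fun i h h' he => hxF ⟨i, h, h', he⟩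
  refine ⟨by omega, fun i j hi hi' hj hj' hij => ?_, fun i hi hi' => ?_, fun i hi hi' => ?_⟩
  · by_cases h1 : i = n + 1 <;> by_cases h2 : j = n + 1
    · omega
    · simp only [h1, h2, if_true, if_false] at hij
      exact absurd hij (hxe _ (by omega) (by omega))
    · simp only [h1, h2, if_true, if_false] at hij
      exact absurd hij.symm (hxe _ (by omega) (by omega))
    · simp only [h1, h2, if_false] at hij
      exact hinj _ _ (by omega) (by omega) (by omega) (by omega) hij
  · by_cases h1 : i = n + 1
    · simpa [h1] using hx
    · simpa [h1] using hE i (by omega) (by omega)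
  · have h0 : i ≠ n + 1 := by omega
    have h0' : i ≠ n := by omega
    by_cases h1 : i = n - 1
    · have hpb : posBool b i = true := by
        unfold posBool at *
        cases b <;> grind
      have e1 : i + 1 = n := by omega
      have e2 : i + 2 = n + 1 := by omega
      rw [hpb]
      have hset : ({e i, e n, x} : Set α) = {x, e (n - 1), e n} := by
        rw [h1]; ext z; simp only [mem_insert_iff, mem_singleton_iff]; tauto
      simpa [TriOrTriad, h0, e1, e2, hset] using hT
    · have e2 : i + 1 ≠ n := by omega
      simpa [h0, h0', e2] using htri i hi (by omega)

end PaperDefs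

/-! ### Classification of the triangles -/

open PaperDefs

/-- The possible triangles through a single element outside a fan. -/
theorem statement10 (M : Matroid α) (hM3 : ThreeConn M) (b : Bool) (n : ℕ) (e : ℕ → α)
    (hfan : IsFanFun M b n e) (hn : 4 ≤ n)
    (x : α) (hx : x ∈ M.E) (hxF : x ∉ fanSet n e)
    (T : Set α) (hT : IsTriangle M T) (hxT : x ∈ T)
    (hTsub : T ⊆ insert x (fanSet n e)) :
    (T = {x, e 1, e 2} ∧ posBool b 1 = false ∧
        IsFanFun M (!b) (n + 1) (fun k => if k = 1 then x else e (k - 1))) ∨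
    (T = {x, e (n-1), e n} ∧ posBool b n = false ∧
        IsFanFun M b (n + 1) (fun k => if k = n + 1 then x else e k)) ∨
    (T = {x, e 1, e n} ∧ posBool b 1 = true ∧ posBool b n = true) ∨
    (T = {x, e 2, e 4} ∧ posBool b 2 = false ∧ n ≤ 5) ∨
    (T = {x, e (n-1), e (n-3)} ∧ posBool b (n-1) = false ∧ n ≤ 5) := by
  obtain ⟨-, hinj, hE, htri⟩ := id hfan
  have hxe : ∀ i, 1 ≤ i → i ≤ n → x ≠ e i := fun i h h' he => hxF ⟨i, h, h', he⟩
  have hne : ∀ i j, 1 ≤ i → i ≤ n → 1 ≤ j → j ≤ n → i ≠ j → e i ≠ e j :=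
    fun i j h1 h2 h3 h4 h he => h (hinj i j h1 h2 h3 h4 he)
  have hswap : ∀ p q, ({x, e p, e q} : Set α) = {x, e q, e p} := fun p q => by
    rw [pair_comm]
  -- `e 1, e 2, e 3, e 4` are distinct, so removing two elements leaves at least two
  have hbig : ∀ u v, 2 ≤ (M.E \ {u, v}).encard := by
    intro u v
    have hsub : ({e 1, e 2, e 3, e 4} : Set α) ⊆ M.E := by
      rintro z (rfl | rfl | rfl | rfl) <;> exact hE _ (by omega) (by omega)
    have hcard : ({e 1, e 2, e 3, e 4} : Set α).encard = 4 := by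
      have := hne 1 2 (by omega) (by omega) (by omega) (by omega) (by omega)
      have := hne 1 3 (by omega) (by omega) (by omega) (by omega) (by omega)
      have := hne 1 4 (by omega) (by omega) (by omega) (by omega) (by omega)
      have := hne 2 3 (by omega) (by omega) (by omega) (by omega) (by omega)
      have := hne 2 4 (by omega) (by omega) (by omega) (by omega) (by omega)
      have := hne 3 4 (by omega) (by omega) (by omega) (by omega) (by omega)
      rw [encard_insert_of_notMem (by simp [*]), encard_insert_of_notMem (by simp [*]),
        encard_pair (by assumption)]
      norm_num
    have h4 : (4 : ℕ∞) ≤ M.E.encard := hcard ▸ encard_le_encard hsub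
    have h5 : M.E.encard ≤ (M.E \ {u, v}).encard + ({u, v} : Set α).encard :=
      (encard_le_encard (subset_sdiff_union _ _)).trans (encard_union_le _ _)
    have h6 : ({u, v} : Set α).encard ≤ 2 := by
      refine (encard_insert_le _ _).trans ?_
      rw [encard_singleton, one_add_one_eq_two]
    have h7 : (2 : ℕ∞) + 2 ≤ (M.E \ {u, v}).encard + 2 := by
      calc (2 : ℕ∞) + 2 = 4 := by norm_num
        _ ≤ _ := h4.trans (h5.trans (by gcongr))
    exact (ENat.add_le_add_iff_right (by simp)).mp h7
  have hindx : ∀ i, 1 ≤ i → i ≤ n → M.Indep {x, e i} := fun i h h' =>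
    hM3.indep_pair hx (hE i h h') (hxe i h h') (hbig _ _)
  have hind : ∀ i j, 1 ≤ i → i ≤ n → 1 ≤ j → j ≤ n → i ≠ j → M.Indep {e i, e j} :=
    fun i j h1 h2 h3 h4 h => hM3.indep_pair (hE i h1 h2) (hE j h3 h4) (hne i j h1 h2 h3 h4 h)
      (hbig _ _)
  have helim : ∀ i j k, 1 ≤ i → i ≤ n → 1 ≤ j → j ≤ n → 1 ≤ k → k ≤ n → i ≠ j → j ≠ k →
      i ≠ k → IsTriangle M {x, e i, e j} → IsTriangle M {e i, e j, e k} →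
      IsTriangle M {x, e i, e k} := fun i j k h1 h2 h3 h4 h5 h6 hij hjk hik t1 t2 =>
    triangle_elim t1 t2 (hxe i h1 h2) (hxe j h3 h4) (hne i j h1 h2 h3 h4 hij)
      (hne i k h1 h2 h5 h6 hik) (hne j k h3 h4 h5 h6 hjk) (hxe k h5 h6) (hindx i h1 h2)
      (hindx k h5 h6) (hind i k h1 h2 h5 h6 hik)
  -- `c` is the parity of the indices of spoke elements
  obtain ⟨c, hc⟩ : ∃ c, ∀ k, posBool b k = true ↔ k % 2 = c % 2 := by
    cases b
    · exact ⟨0, fun k => by unfold posBool; grind⟩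
    · exact ⟨1, fun k => by unfold posBool; grind⟩
  have hc' : ∀ k, posBool b k = false ↔ k % 2 ≠ c % 2 := fun k => by
    rw [← not_iff_not, not_not, ← hc]; simp
  have horth : ∀ p q, 1 ≤ q → q ≤ n → IsTriangle M {x, e p, e q} →
      ∀ k, 2 ≤ k → k + 1 ≤ n → k % 2 = c % 2 → (p + 1 = k ∨ p = k ∨ p = k + 1) →
      (q + 1 = k ∨ q = k ∨ q = k + 1) := fun p q h3 h4 t k hk hk' hkc =>
    fan_orthogonality hfan hxF h3 h4 t hk hk' ((hc k).2 hkc)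
  -- an interior spoke of `T` is adjacent to a terminal rim element of `T`
  have hspoke : ∀ p q, 1 ≤ q → q ≤ n → p ≠ q → IsTriangle M {x, e p, e q} → 2 ≤ p →
      p + 1 ≤ n → p % 2 = c % 2 → (p = 2 ∧ q = 1) ∨ (p + 1 = n ∧ q = n) := by
    intro p q h3 h4 hpq t hp hp' hpc
    have hq := horth p q h3 h4 t p hp hp' hpc (by omega)
    by_contra hcon
    rcases hq with hq | hq | hq
    · obtain ⟨m, rfl⟩ : ∃ m, p = m + 2 := ⟨p - 2, by omega⟩
      obtain rfl : q = m + 1 := by omega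
      have t2 := htri m (by omega) (by omega)
      rw [(hc m).2 (by omega)] at t2
      have t2' : IsTriangle M {e (m + 2), e (m + 1), e m} := by
        have hs : ({e (m + 2), e (m + 1), e m} : Set α) = {e m, e (m + 1), e (m + 2)} := by
          ext z; simp only [mem_insert_iff, mem_singleton_iff]; tauto
        rw [hs]; exact t2
      have t3 := helim (m + 2) (m + 1) m (by omega) (by omega) (by omega) (by omega) (by omega)
        (by omega) (by omega) (by omega) (by omega) t t2'
      have := horth (m + 2) m (by omega) (by omega) t3 (m + 2) hp hp' hpc
        (by omega)
      omega
    · omega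
    · subst hq
      have t2 := htri p (by omega) (by omega)
      rw [(hc p).2 hpc] at t2
      have t3 := helim p (p + 1) (p + 2) (by omega) (by omega) (by omega) (by omega) (by omega)
        (by omega) (by omega) (by omega) (by omega) t t2
      have := horth p (p + 2) (by omega) (by omega) t3 p hp hp' hpc
        (by omega)
      omega
  obtain ⟨p, q, hp, hp', hq, hq', hpq, rfl⟩ : ∃ p q, 1 ≤ p ∧ p ≤ n ∧ 1 ≤ q ∧ q ≤ n ∧ p < q ∧
      T = {x, e p, e q} := by
    obtain ⟨u, v, w, huv, huw, hvw, rfl⟩ := encard_eq_three.mp hT.2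
    have aux : ∀ y z, y ≠ z → y ≠ x → z ≠ x → y ∈ insert x (fanSet n e) →
        z ∈ insert x (fanSet n e) → ∃ p q, 1 ≤ p ∧ p ≤ n ∧ 1 ≤ q ∧ q ≤ n ∧ p < q ∧
        ({x, y, z} : Set α) = {x, e p, e q} := by
      intro y z hyz hy hz hy' hz'
      obtain ⟨i, hi, hi', rfl⟩ := hy'.resolve_left hy
      obtain ⟨j, hj, hj', rfl⟩ := hz'.resolve_left hz
      rcases lt_trichotomy i j with h | h | h
      · exact ⟨i, j, hi, hi', hj, hj', h, rfl⟩
      · exact absurd (h ▸ rfl) hyz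
      · exact ⟨j, i, hj, hj', hi, hi', h, hswap i j⟩
    have hu := hTsub (show u ∈ ({u, v, w} : Set α) by simp)
    have hv := hTsub (show v ∈ ({u, v, w} : Set α) by simp)
    have hw := hTsub (show w ∈ ({u, v, w} : Set α) by simp)
    rcases hxT with rfl | rfl | rfl
    · exact aux v w hvw huv.symm huw.symm hv hw
    · rw [insert_comm]
      exact aux u w huw huv hvw.symm hu hw
    · have hs : ({u, v, x} : Set α) = {x, u, v} := by
        ext z; simp only [mem_insert_iff, mem_singleton_iff]; tauto
      rw [hs]
      exact aux u v huv huw hvw hu hv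
  have hT' : IsTriangle M {x, e q, e p} := hswap p q ▸ hT
  have sp := hspoke p q hq hq' (by omega) hT
  have sq := hspoke q p hp hp' (by omega) hT'
  have oq := horth q p hp hp' hT'
  have op := horth p q hq hq' hT
  -- the triads on either side of a rim element `e p` or `e q`
  have op1 : p % 2 ≠ c % 2 → p ≤ 2 := fun h => by
    by_contra hcon
    have := op (p - 1) (by omega) (by omega) (by omega) (by omega)
    omega
  have op2 : p % 2 ≠ c % 2 → p + 2 ≤ n → q ≤ p + 2 := fun h h' => by
    have := op (p + 1) (by omega) (by omega) (by omega) (by omega)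
    omega
  have oq1 : q % 2 ≠ c % 2 → 3 ≤ q → q ≤ p + 2 := fun h h' => by
    have := oq (q - 1) (by omega) (by omega) (by omega) (by omega)
    omega
  have oq2 : q % 2 ≠ c % 2 → n ≤ q + 1 := fun h => by
    by_contra hcon
    have := oq (q + 1) (by omega) (by omega) (by omega) (by omega)
    omega
  have sp' : p % 2 = c % 2 → 2 ≤ p → p + 1 = n ∧ q = n := fun h h' => by
    have := sp h' (by omega) h
    omega
  have sq' : q % 2 = c % 2 → q + 1 ≤ n → q = 2 ∧ p = 1 := fun h h' => by
    have := sq (by omega) h' h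
    omega
  clear op oq sp sq
  have hcases : (p = 1 ∧ q = 2 ∧ 1 % 2 ≠ c % 2) ∨ (p + 1 = n ∧ q = n ∧ n % 2 ≠ c % 2) ∨
      (p = 1 ∧ q = n ∧ 1 % 2 = c % 2 ∧ n % 2 = c % 2) ∨ (p = 2 ∧ q = 4 ∧ 2 % 2 ≠ c % 2 ∧ n ≤ 5) ∨
      (p = 1 ∧ q = 3 ∧ n = 4 ∧ 3 % 2 ≠ c % 2) := by
    by_cases hpc : p % 2 = c % 2 <;> by_cases hqc : q % 2 = c % 2
    · have hp1 : p = 1 := by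
        by_contra h
        have := sp' hpc (by omega)
        omega
      have hqn : q = n := by
        by_contra h
        have := sq' hqc (by omega)
        omega
      subst hp1 hqn
      exact Or.inr (Or.inr (Or.inl ⟨rfl, rfl, hpc, hqc⟩))
    · rcases hp.eq_or_lt with h | h
      · have := oq2 hqc
        have := oq1 hqc (by omega)
        omega
      · obtain ⟨h1, h2⟩ := sp' hpc h
        exact Or.inr (Or.inl ⟨h1, h2, h2 ▸ hqc⟩)
    · have := op1 hpc
      rcases hq'.eq_or_lt with h | h
      · have := op2 hpc (by omega)
        omega
      · obtain ⟨rfl, rfl⟩ := sq' hqc h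
        exact Or.inl ⟨rfl, rfl, hpc⟩
    · have := op1 hpc
      have := op2 hpc (by omega)
      have := oq2 hqc
      obtain rfl : q = p + 2 := by omega
      obtain rfl | rfl : p = 1 ∨ p = 2 := by omega
      · exact Or.inr (Or.inr (Or.inr (Or.inr ⟨rfl, rfl, by omega, hqc⟩)))
      · exact Or.inr (Or.inr (Or.inr (Or.inl ⟨rfl, rfl, hpc, by omega⟩)))
  rcases hcases with ⟨rfl, rfl, h⟩ | ⟨h1, h2, h⟩ | ⟨rfl, rfl, h, h'⟩ | ⟨rfl, rfl, h, h'⟩ |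
    ⟨rfl, rfl, rfl, h⟩
  · exact Or.inl ⟨rfl, (hc' 1).2 h, hfan.cons hx hxF hT ((hc' 1).2 h)⟩
  · obtain rfl : p = n - 1 := by omega
    subst h2
    exact Or.inr (Or.inl ⟨rfl, (hc' _).2 h, hfan.snoc hx hxF hT ((hc' _).2 h)⟩)
  · exact Or.inr (Or.inr (Or.inl ⟨rfl, (hc 1).2 h, (hc _).2 h'⟩))
  · exact Or.inr (Or.inr (Or.inr (Or.inl ⟨rfl, (hc' 2).2 h, h'⟩)))
  · exact Or.inr (Or.inr (Or.inr (Or.inr ⟨hswap 1 3, (hc' 3).2 h, by omega⟩)))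
end

section
/- Assume that (e_1, ..., e_n) is a fan of a 3-connected matroid M, and that 4 <= |E(M)| <= n + 1. Then M is a wheel or a whirl. -/
/-!
Write `λ(X) = r(X) + r✶(X) - |X|` for the connectivity function, which is invariant under
duality and under complementation. In a 3-connected matroid with at least four elements,
`λ(X) ≥ 2` whenever `|X|, |E - X| ≥ 2`; hence all pairs are independent and coindependent, and a
3-set with `λ ≤ 2` is a triangle or a triad. Every segment of a fan has `λ ≤ 2`, since each new
element lies in the closure or the coclosure of the previous two (`conn_seg`). So a 3-set whose
complement is a segment of the fan is a triangle or a triad (`tri_of_compl_seg`), and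
orthogonality with the neighbouring triples decides which. This appends a missing element to the
fan (`exists_extend`), closes a fan through all of `E` up into a cycle (`wrap_one`, `wrap_two`),
and forces its length to be even (`even_length`). The case `|E| = 4` is separate: there every
3-set is both a triangle and a triad.

It remains to treat a cyclic sequence of spokes `s i` and rim elements `w i` with triangles
`{s i, w i, s (i+1)}` and triads `{w i, s (i+1), w (i+1)}`. By orthogonality with the triads, a
circuit that contains a rim element also contains the following rim element or the spoke between
them. Hence every circuit contains two spokes with an arc between them, or equals the rim, or
equals the rim plus one spoke (`circuit_dichotomy`). The triangles show that two spokes with an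
arc are dependent, and the same dichotomy shows that they form a circuit (`arc_isCircuit`). If the
rim is dependent, it is a circuit and `M` is a wheel. If it is independent, then, the spokes
spanning `M`, the rank is at most the size of the rim, so the rim plus any spoke is dependent,
hence a circuit, and `M` is a whirl.
-/

open Matroid Set

universe u

variable {α : Type u}

open PaperDefs

namespace FanProof

/-! ### Ranks in finite matroids -/

/-- The rank of a set as a natural number; only meaningful when the rank is finite. -/
noncomputable def rk (M : Matroid α) (X : Set α) : ℕ := (M.eRk X).toNat

/-- The sum `r(X) + r✶(X)`. It exceeds the connectivity `λ(X) = r(X) + r(E - X) - r(M)`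
by `|X|`, and is visibly invariant under duality. -/
noncomputable def conn (M : Matroid α) (X : Set α) : ℕ := rk M X + rk M✶ X

lemma erk_eq_eRk (M : Matroid α) (X : Set α) : erk M X = M.eRk X := by
  apply le_antisymm
  · exact iSup₂_le fun I hI => hI.1.encard_le_eRk_of_subset hI.2
  · obtain ⟨I, hIX, hI, hcard⟩ := le_eRk_iff.1 (le_refl (M.eRk X))
    rw [← hcard]
    exact le_iSup₂ (f := fun (I : Set α) (_ : I ∈ {I : Set α | M.Indep I ∧ I ⊆ X}) => I.encard)
      I ⟨hI, hIX⟩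

lemma isCircuit_iff' (M : Matroid α) (C : Set α) :
    PaperDefs.IsCircuit M C ↔ M.IsCircuit C :=
  Matroid.isCircuit_iff_forall_ssubset.symm

lemma cast_rk (M : Matroid α) [M.Finite] (X : Set α) : (rk M X : ℕ∞) = M.eRk X :=
  ENat.natCast_toNat (Matroid.eRk_ne_top_iff.2 (Matroid.isRkFinite_set M X))

lemma rk_dual (M : Matroid α) [M.Finite] {X : Set α} (hX : X ⊆ M.E) :
    rk M✶ X + rk M M.E = rk M (M.E \ X) + X.ncard := by
  have h := M.eRk_dual_add_eRank X hX
  rw [← Matroid.eRk_ground, ← cast_rk, ← cast_rk, ← cast_rk,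
    ← (M.ground_finite.subset hX).cast_ncard_eq] at h
  exact_mod_cast h

lemma rk_mono (M : Matroid α) [M.Finite] {X Y : Set α} (h : X ⊆ Y) : rk M X ≤ rk M Y := by
  have := M.eRk_mono h
  rw [← cast_rk, ← cast_rk] at this
  exact_mod_cast this

lemma rk_insert_le (M : Matroid α) [M.Finite] (e : α) (X : Set α) :
    rk M (insert e X) ≤ rk M X + 1 := by
  have := M.eRk_insert_le_add_one e X
  rw [← cast_rk, ← cast_rk] at this
  exact_mod_cast this

lemma rk_insert_of_mem_closure (M : Matroid α) {e : α} {X : Set α} (he : e ∈ M.closure X) :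
    rk M (insert e X) = rk M X := by
  unfold rk
  rw [← M.eRk_closure_eq, Matroid.closure_insert_eq_of_mem_closure he, M.eRk_closure_eq]

lemma rk_le_ncard (M : Matroid α) [M.Finite] {X : Set α} (hX : X ⊆ M.E) : rk M X ≤ X.ncard := by
  have := M.eRk_le_encard X
  rw [← cast_rk, ← (M.ground_finite.subset hX).cast_ncard_eq] at this
  exact_mod_cast this

lemma indep_iff_rk (M : Matroid α) [M.Finite] {X : Set α} (hX : X ⊆ M.E) :
    M.Indep X ↔ rk M X = X.ncard := by
  rw [Matroid.indep_iff_eRk_eq_encard, ← cast_rk, ← (M.ground_finite.subset hX).cast_ncard_eq]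
  exact_mod_cast Iff.rfl

lemma conn_dual (M : Matroid α) (X : Set α) : conn M✶ X = conn M X := by
  simp [conn, add_comm]

/-- Symmetry of the connectivity function: `λ(X) = λ(E - X)`. -/
lemma conn_compl (M : Matroid α) [M.Finite] {X : Set α} (hX : X ⊆ M.E) :
    conn M X + (M.E \ X).ncard = conn M (M.E \ X) + X.ncard := by
  have h1 := rk_dual M hX
  have h2 := rk_dual M (X := M.E \ X) sdiff_subset
  rw [sdiff_sdiff_cancel_left hX] at h2
  unfold conn
  omega

/-! ### Triangles and triads -/

/-- `M` if `b` is true, and its dual otherwise, so that `TriOrTriad M b` means being a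
triangle of `side M b`. -/
def side (M : Matroid α) (b : Bool) : Matroid α := cond b M M✶

@[simp] lemma side_ground (M : Matroid α) (b : Bool) : (side M b).E = M.E := by
  cases b <;> rfl

lemma conn_side (M : Matroid α) (b : Bool) (X : Set α) : conn (side M b) X = conn M X := by
  cases b
  · exact conn_dual M X
  · rfl

lemma side_not (M : Matroid α) (b : Bool) : side M (!b) = (side M b)✶ := by
  cases b <;> simp [side]

lemma side_finite (M : Matroid α) [M.Finite] (b : Bool) : (side M b).Finite :=
  ⟨by rw [side_ground]; exact M.ground_finite⟩

lemma tri_iff (M : Matroid α) (b : Bool) (T : Set α) :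
    TriOrTriad M b T ↔ (side M b).IsCircuit T ∧ T.encard = 3 := by
  cases b <;> simp [TriOrTriad, IsTriad, IsTriangle, isCircuit_iff', side]

/-- Orthogonality of a triangle and a triad. -/
lemma tri_orth {M : Matroid α} {b : Bool} {T T' : Set α} (h : TriOrTriad M b T)
    (h' : TriOrTriad M (!b) T') (x : α) : T ∩ T' ≠ {x} := by
  rw [tri_iff] at h h'
  rw [side_not] at h'
  exact h.1.inter_isCocircuit_ne_singleton h'.1

/-- Adding to `X` an element that completes a triangle or triad with two elements of `X`
raises `r(X) + r✶(X)` by at most one. -/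
lemma conn_insert_le {M : Matroid α} [M.Finite] {b : Bool} {x y z : α} {X : Set α}
    (h : TriOrTriad M b {x, y, z}) (hx : x ∈ X) (hy : y ∈ X) :
    conn M (insert z X) ≤ conn M X + 1 := by
  rw [tri_iff] at h
  have hz : z ∈ (side M b).closure X := by
    refine (side M b).closure_subset_closure ?_
      (h.1.mem_closure_sdiff_singleton_of_mem (e := z) (by simp))
    rintro a ⟨ha, haz⟩
    simp only [mem_insert_iff, mem_singleton_iff] at ha haz
    rcases ha with rfl | rfl | rfl
    · exact hx
    · exact hy
    · exact absurd rfl haz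
  have := side_finite M b
  rw [← conn_side M b, ← conn_side M b X]
  have h1 := rk_insert_of_mem_closure _ hz
  have h2 := rk_insert_le (side M b)✶ z X
  unfold conn
  omega

/-! ### Small sets in 3-connected matroids -/

/-- Self-dual form of 3-connectedness for finite matroids with at least four elements: every set
`X` with `|X|, |E - X| ≥ 2` has connectivity at least two. -/
structure TC (M : Matroid α) : Prop where
  fin : M.Finite
  four : 4 ≤ M.E.ncard
  sep : ∀ X ⊆ M.E, 2 ≤ X.ncard → 2 ≤ (M.E \ X).ncard → X.ncard + 2 ≤ conn M X

lemma TC.side {M : Matroid α} (h : TC M) (b : Bool) : TC (side M b) := by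
  have := h.fin
  refine ⟨side_finite M b, by simpa using h.four, fun X hX h1 h2 => ?_⟩
  rw [conn_side]
  rw [side_ground] at hX h2
  exact h.sep X hX h1 h2

lemma TC.of_threeConn {M : Matroid α} (h : ThreeConn M) (hfin : M.E.Finite)
    (h4 : 4 ≤ M.E.ncard) : TC M := by
  have : M.Finite := ⟨hfin⟩
  refine ⟨‹_›, h4, fun X hX h1 h2 => ?_⟩
  by_contra hlt
  apply h.2 X (M.E \ X)
  refine ⟨union_sdiff_cancel hX, disjoint_sdiff_right, ?_, ?_, ?_⟩
  · rw [← (hfin.subset hX).cast_ncard_eq]; exact_mod_cast h1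
  · rw [← (hfin.subset sdiff_subset).cast_ncard_eq]; exact_mod_cast h2
  · rw [erk_eq_eRk, erk_eq_eRk, erk_eq_eRk, ← cast_rk, ← cast_rk, ← cast_rk]
    have := rk_dual M hX
    unfold conn at hlt
    norm_cast
    omega

lemma TC.pair_indep {M : Matroid α} (h : TC M) {X : Set α} (hX : X ⊆ M.E) (hc : X.ncard = 2) :
    M.Indep X := by
  have := h.fin
  have h1 := h.four
  have h2 := ncard_sdiff_add_ncard_of_subset hX M.ground_finite
  have h3 := h.sep X hX (by omega) (by omega)
  have h4 := rk_le_ncard M hX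
  have h5 := rk_le_ncard M✶ (X := X) hX
  rw [indep_iff_rk M hX]
  unfold conn at h3
  omega

lemma TC.isCircuit_of_rk {M : Matroid α} (h : TC M) {Y : Set α} (hY : Y ⊆ M.E)
    (hc : Y.ncard = 3) (hr : rk M Y ≤ 2) : M.IsCircuit Y := by
  have := h.fin
  rw [Matroid.isCircuit_iff_dep_forall_sdiff_singleton_indep]
  refine ⟨⟨fun hi => ?_, hY⟩, fun x hx => ?_⟩
  · rw [indep_iff_rk M hY] at hi
    omega
  · apply h.pair_indep (sdiff_subset.trans hY)
    rw [ncard_sdiff_singleton_of_mem hx, hc]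

lemma TC.tri_of_rk {M : Matroid α} (h : TC M) {Y : Set α} (hY : Y ⊆ M.E)
    (hc : Y.ncard = 3) {b : Bool} (hr : rk (FanProof.side M b) Y ≤ 2) : TriOrTriad M b Y := by
  have := h.fin
  rw [tri_iff]
  refine ⟨(h.side b).isCircuit_of_rk (by simpa using hY) hc hr, ?_⟩
  rw [← (M.ground_finite.subset hY).cast_ncard_eq, hc]
  rfl

lemma TC.tri_or_tri {M : Matroid α} (h : TC M) {Y : Set α} (hY : Y ⊆ M.E)
    (hc : Y.ncard = 3) (hr : conn M Y ≤ 5) (b : Bool) :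
    TriOrTriad M b Y ∨ TriOrTriad M (!b) Y := by
  by_cases h1 : rk (FanProof.side M b) Y ≤ 2
  · exact Or.inl (h.tri_of_rk hY hc h1)
  · refine Or.inr (h.tri_of_rk hY hc ?_)
    rw [← conn_side M b] at hr
    rw [side_not]
    unfold conn at hr
    omega

/-- With exactly four elements, every 3-subset is both a triangle and a triad. -/
lemma TC.tri_of_four {M : Matroid α} (h : TC M) (hE : M.E.ncard = 4) {Y : Set α} (hY : Y ⊆ M.E)
    (hc : Y.ncard = 3) (b : Bool) : TriOrTriad M b Y := by
  have := h.fin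
  apply h.tri_of_rk hY hc
  have h1 := conn_compl M hY
  have h2 := ncard_sdiff_add_ncard_of_subset hY M.ground_finite
  have h3 := rk_le_ncard M (X := M.E \ Y) sdiff_subset
  have h4 := rk_le_ncard M✶ (X := M.E \ Y) sdiff_subset
  have h5 : 2 ≤ rk (FanProof.side M (!b)) Y := by
    obtain ⟨x, hx⟩ : Y.Nonempty := by
      rw [← ncard_pos (M.ground_finite.subset hY)]; omega
    have hc' : (Y \ {x}).ncard = 2 := by rw [ncard_sdiff_singleton_of_mem hx, hc]
    have hs : Y \ {x} ⊆ (FanProof.side M (!b)).E := by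
      rw [side_ground]; exact sdiff_subset.trans hY
    have := side_finite M (!b)
    have := (h.side (!b)).pair_indep hs hc'
    rw [indep_iff_rk _ hs] at this
    rw [← hc', ← this]
    exact rk_mono _ sdiff_subset
  rw [← conn_side M b Y] at h1
  rw [side_not] at h5
  unfold conn at h1
  omega

/-! ### Closing a fan up into a cycle -/

lemma posBool_succ (b : Bool) (i : ℕ) : posBool b (i + 1) = !posBool b i := by
  unfold posBool
  rcases Nat.mod_two_eq_zero_or_one i with h | h
  · simp [h, Nat.add_mod]
  · simp [h, Nat.add_mod]

lemma posBool_add_two (b : Bool) (i : ℕ) : posBool b (i + 2) = posBool b i := by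
  simp [posBool]

lemma tri_clash {M : Matroid α} {b : Bool} {T T' : Set α} (x : α) (h : TriOrTriad M b T)
    (h' : TriOrTriad M (!b) T') (hx : x ∈ T) (hx' : x ∈ T') (hu : ∀ y ∈ T, y ∈ T' → y = x) :
    False :=
  tri_orth h h' x (subset_antisymm (fun y hy => hu y hy.1 hy.2) (by simp [hx, hx']))

lemma ncard_three {x y z : α} (h1 : x ≠ y) (h2 : x ≠ z) (h3 : y ≠ z) :
    ({x, y, z} : Set α).ncard = 3 := by
  rw [ncard_eq_three]
  exact ⟨x, y, z, h1, h2, h3, rfl⟩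

section Fan

variable {M : Matroid α} {b : Bool} {n : ℕ} {e : ℕ → α}

/-- The set of elements of a fan in positions `i` to `j`. -/
def seg (e : ℕ → α) (i j : ℕ) : Set α := e '' Icc i j

lemma seg_succ (e : ℕ → α) {i j : ℕ} (h : i ≤ j + 1) :
    seg e i (j + 1) = insert (e (j + 1)) (seg e i j) := by
  unfold seg
  rw [← image_insert_eq]
  congr 1
  ext k
  simp only [mem_Icc, mem_insert_iff]
  omega

lemma ncard_seg (hf : IsFanFun M b n e) {i j : ℕ} (hi : 1 ≤ i) (hj : j ≤ n) :
    (seg e i j).ncard = j + 1 - i := by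
  unfold seg
  rw [InjOn.ncard_image]
  · rw [← Finset.coe_Icc, ncard_coe_finset, Nat.card_Icc]
  · intro x hx y hy hxy
    simp only [mem_Icc] at hx hy
    exact hf.2.1 x y (by omega) (by omega) (by omega) (by omega) hxy

lemma seg_subset (hf : IsFanFun M b n e) {i j : ℕ} (hi : 1 ≤ i) (hj : j ≤ n) :
    seg e i j ⊆ M.E := by
  rintro _ ⟨k, hk, rfl⟩
  simp only [mem_Icc] at hk
  exact hf.2.2.1 k (by omega) (by omega)

/-- A segment of a fan has connectivity at most two. -/
lemma conn_seg (hM : M.Finite) (hf : IsFanFun M b n e) {i : ℕ} (hi : 1 ≤ i) (d : ℕ)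
    (hd : i + 1 + d ≤ n) : conn M (seg e i (i + 1 + d)) ≤ d + 4 := by
  induction d with
  | zero =>
    have h0 := ncard_seg hf hi hd
    have h1 := rk_le_ncard M (seg_subset hf hi hd)
    have h2 := rk_le_ncard M✶ (X := seg e i (i + 1 + 0)) (seg_subset hf hi hd)
    unfold conn
    omega
  | succ d ih =>
    have h1 := ih (by omega)
    have ht := hf.2.2.2 (i + d) (by omega) (by omega)
    have hs : i + 1 + (d + 1) = i + 1 + d + 1 := by omega
    rw [hs, seg_succ e (by omega)]
    have h2 : i + d + 2 = i + 1 + d + 1 := by omega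
    rw [h2] at ht
    have := conn_insert_le (X := seg e i (i + 1 + d)) ht
      ⟨i + d, by simp only [mem_Icc]; omega, rfl⟩
      ⟨i + d + 1, by simp only [mem_Icc]; omega, rfl⟩
    omega

/-- A 3-set whose complement is a segment of a fan is a triangle or a triad. -/
lemma tri_of_compl_seg (h : TC M) (hf : IsFanFun M b n e) {Y : Set α} (hY : Y ⊆ M.E)
    (hc : Y.ncard = 3) {i j : ℕ} (hi : 1 ≤ i) (hij : i < j) (hj : j ≤ n)
    (hYc : M.E \ Y = seg e i j) (b' : Bool) :
    TriOrTriad M b' Y ∨ TriOrTriad M (!b') Y := by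
  have := h.fin
  apply h.tri_or_tri hY hc
  have h1 := conn_compl M hY
  obtain ⟨d, rfl⟩ : ∃ d, j = i + 1 + d := ⟨j - i - 1, by omega⟩
  have h2 := conn_seg h.fin hf hi d hj
  have h3 := ncard_seg hf hi hj
  rw [hYc] at h1
  omega

lemma ground_eq_seg (h : TC M) (hf : IsFanFun M b n e) (hE : M.E.ncard = n) :
    M.E = seg e 1 n := by
  have := h.fin
  symm
  apply eq_of_subset_of_ncard_le (seg_subset hf le_rfl le_rfl) _ M.ground_finite
  rw [ncard_seg hf le_rfl le_rfl, hE]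
  omega

/-- A fan missing just one element of the ground set can be extended by that element. -/
lemma exists_extend (h : TC M) (hf : IsFanFun M b n e) (hE : M.E.ncard = n + 1) :
    ∃ e', IsFanFun M b (n + 1) e' := by
  have := h.fin
  have hss : seg e 1 n ⊆ M.E := seg_subset hf le_rfl le_rfl
  have hcs : (seg e 1 n).ncard = n := by rw [ncard_seg hf le_rfl le_rfl]; omega
  obtain ⟨f, hfE, hfn⟩ : ∃ f ∈ M.E, f ∉ seg e 1 n := by
    by_contra! hcon
    have := ncard_le_ncard (s := M.E) hcon (M.ground_finite.subset hss)
    omega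
  have hEi : M.E = insert f (seg e 1 n) := by
    symm
    apply eq_of_subset_of_ncard_le (insert_subset hfE hss) _ M.ground_finite
    rw [ncard_insert_of_notMem hfn (M.ground_finite.subset hss)]
    omega
  have hne : ∀ i, 1 ≤ i → i ≤ n → e i ≠ f := by
    rintro i h1 h2 rfl
    exact hfn ⟨i, ⟨h1, h2⟩, rfl⟩
  have hn3 := hf.1
  -- The only new triple is the last one.
  have key : TriOrTriad M (posBool b (n - 1)) {e (n - 1), e n, f} := by
    have hY : ({e (n - 1), e n, f} : Set α) ⊆ M.E := by
      rintro y (rfl | rfl | rfl)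
      · exact hf.2.2.1 _ (by omega) (by omega)
      · exact hf.2.2.1 _ (by omega) (by omega)
      · exact hfE
    have hc : ({e (n - 1), e n, f} : Set α).ncard = 3 := by
      apply ncard_three _ (hne _ (by omega) (by omega)) (hne _ (by omega) (by omega))
      intro heq
      have := hf.2.1 _ _ (by omega) (by omega) (by omega) (by omega) heq
      omega
    by_cases hn : n = 3
    · exact h.tri_of_four (by omega) hY hc _
    obtain ⟨m, rfl⟩ : ∃ m, n = m + 4 := ⟨n - 4, by omega⟩
    have hYc : M.E \ {e (m + 4 - 1), e (m + 4), f} = seg e 1 (m + 2) := by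
      ext x
      constructor
      · rintro ⟨hx, hx'⟩
        rw [hEi] at hx
        simp only [mem_insert_iff, mem_singleton_iff, not_or] at hx'
        rcases hx with hx | ⟨k, ⟨hk1, hk2⟩, rfl⟩
        · exact absurd hx hx'.2.2
        · refine ⟨k, ⟨hk1, ?_⟩, rfl⟩
          by_contra hlt
          rcases (by omega : k = m + 4 - 1 ∨ k = m + 4) with rfl | rfl
          · exact hx'.1 rfl
          · exact hx'.2.1 rfl
      · rintro ⟨k, ⟨hk1, hk2⟩, rfl⟩
        refine ⟨hf.2.2.1 _ hk1 (by omega), ?_⟩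
        rintro (hh | hh | hh)
        · have := hf.2.1 _ _ (by omega) (by omega) (by omega) (by omega) hh
          omega
        · have := hf.2.1 _ _ (by omega) (by omega) (by omega) (by omega) hh
          omega
        · exact hne _ hk1 (by omega) hh
    rcases tri_of_compl_seg h hf hY hc le_rfl (by omega) (by omega) hYc
      (posBool b (m + 4 - 1)) with h1 | h1
    · exact h1
    exfalso
    have h2 := hf.2.2.2 (m + 1) (by omega) (by omega)
    have hp : posBool b (m + 4 - 1) = posBool b (m + 1) := posBool_add_two b (m + 1)
    rw [hp] at h1
    refine tri_clash (e (m + 3)) h2 h1 (by simp) (by simp) ?_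
    rintro y (rfl | rfl | rfl) (hh | hh | hh)
    any_goals first
      | rfl
      | (exfalso
         have := hf.2.1 _ _ (by omega) (by omega) (by omega) (by omega) hh
         omega)
      | exact absurd hh (hne _ (by omega) (by omega))
  refine ⟨Function.update e (n + 1) f, by omega, ?_, ?_, ?_⟩
  · intro i j hi1 hi2 hj1 hj2 hij
    by_cases h1 : i = n + 1 <;> by_cases h2 : j = n + 1
    · omega
    · subst h1
      rw [Function.update_self, Function.update_of_ne h2] at hij
      exact absurd hij.symm (hne _ hj1 (by omega))
    · subst h2
      rw [Function.update_self, Function.update_of_ne h1] at hij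
      exact absurd hij (hne _ hi1 (by omega))
    · rw [Function.update_of_ne h1, Function.update_of_ne h2] at hij
      exact hf.2.1 _ _ hi1 (by omega) hj1 (by omega) hij
  · intro i hi1 hi2
    by_cases h1 : i = n + 1
    · subst h1
      rwa [Function.update_self]
    · rw [Function.update_of_ne h1]
      exact hf.2.2.1 _ hi1 (by omega)
  · intro i hi1 hi2
    rw [Function.update_of_ne (by omega), Function.update_of_ne (by omega)]
    by_cases h1 : i + 2 = n + 1
    · rw [h1, Function.update_self]
      obtain rfl : i = n - 1 := by omega
      have h3 : n - 1 + 1 = n := by omega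
      rw [h3]
      exact key
    · rw [Function.update_of_ne h1]
      exact hf.2.2.2 i hi1 (by omega)

/-- In a fan through all elements, the last two elements and the first one again form a
triangle or triad, of the type that continues the alternation. -/
lemma wrap_one (h : TC M) (hf : IsFanFun M b n e) (hE : M.E.ncard = n) :
    TriOrTriad M (posBool b (n - 1)) {e (n - 1), e n, e 1} := by
  have := h.fin
  have h4 := h.four
  have hY : ({e (n - 1), e n, e 1} : Set α) ⊆ M.E := by
    rintro y (rfl | rfl | rfl) <;> exact hf.2.2.1 _ (by omega) (by omega)
  have hc : ({e (n - 1), e n, e 1} : Set α).ncard = 3 := by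
    apply ncard_three <;>
    · intro heq
      have := hf.2.1 _ _ (by omega) (by omega) (by omega) (by omega) heq
      omega
  by_cases hn : n = 4
  · exact h.tri_of_four (by omega) hY hc _
  obtain ⟨m, rfl⟩ : ∃ m, n = m + 5 := ⟨n - 5, by omega⟩
  have hYc : M.E \ {e (m + 5 - 1), e (m + 5), e 1} = seg e 2 (m + 3) := by
    ext x
    constructor
    · rintro ⟨hx, hx'⟩
      rw [ground_eq_seg h hf hE] at hx
      simp only [mem_insert_iff, mem_singleton_iff, not_or] at hx'
      obtain ⟨k, ⟨hk1, hk2⟩, rfl⟩ := hx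
      refine ⟨k, ?_, rfl⟩
      by_contra hlt
      simp only [mem_Icc] at hlt
      rcases (by omega : k = m + 5 - 1 ∨ k = m + 5 ∨ k = 1) with rfl | rfl | rfl
      · exact hx'.1 rfl
      · exact hx'.2.1 rfl
      · exact hx'.2.2 rfl
    · rintro ⟨k, ⟨hk1, hk2⟩, rfl⟩
      refine ⟨hf.2.2.1 _ (by omega) (by omega), ?_⟩
      rintro (hh | hh | hh) <;>
      · have := hf.2.1 _ _ (by omega) (by omega) (by omega) (by omega) hh
        omega
  rcases tri_of_compl_seg h hf hY hc (by omega) (by omega) (by omega) hYc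
    (posBool b (m + 5 - 1)) with h1 | h1
  · exact h1
  exfalso
  have h2 := hf.2.2.2 (m + 2) (by omega) (by omega)
  have hp : posBool b (m + 5 - 1) = posBool b (m + 2) := posBool_add_two b (m + 2)
  rw [hp] at h1
  refine tri_clash (e (m + 4)) h2 h1 (by simp) (by simp) ?_
  rintro y (rfl | rfl | rfl) (hh | hh | hh)
  any_goals first
    | rfl
    | (exfalso
       have := hf.2.1 _ _ (by omega) (by omega) (by omega) (by omega) hh
       omega)

lemma wrap_two (h : TC M) (hf : IsFanFun M b n e) (hE : M.E.ncard = n) :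
    TriOrTriad M (!b) {e n, e 1, e 2} := by
  have := h.fin
  have h4 := h.four
  have hY : ({e n, e 1, e 2} : Set α) ⊆ M.E := by
    rintro y (rfl | rfl | rfl) <;> exact hf.2.2.1 _ (by omega) (by omega)
  have hc : ({e n, e 1, e 2} : Set α).ncard = 3 := by
    apply ncard_three <;>
    · intro heq
      have := hf.2.1 _ _ (by omega) (by omega) (by omega) (by omega) heq
      omega
  by_cases hn : n = 4
  · exact h.tri_of_four (by omega) hY hc _
  obtain ⟨m, rfl⟩ : ∃ m, n = m + 5 := ⟨n - 5, by omega⟩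
  have hYc : M.E \ {e (m + 5), e 1, e 2} = seg e 3 (m + 4) := by
    ext x
    constructor
    · rintro ⟨hx, hx'⟩
      rw [ground_eq_seg h hf hE] at hx
      simp only [mem_insert_iff, mem_singleton_iff, not_or] at hx'
      obtain ⟨k, ⟨hk1, hk2⟩, rfl⟩ := hx
      refine ⟨k, ?_, rfl⟩
      by_contra hlt
      simp only [mem_Icc] at hlt
      rcases (by omega : k = m + 5 ∨ k = 1 ∨ k = 2) with rfl | rfl | rfl
      · exact hx'.1 rfl
      · exact hx'.2.1 rfl
      · exact hx'.2.2 rfl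
    · rintro ⟨k, ⟨hk1, hk2⟩, rfl⟩
      refine ⟨hf.2.2.1 _ (by omega) (by omega), ?_⟩
      rintro (hh | hh | hh) <;>
      · have := hf.2.1 _ _ (by omega) (by omega) (by omega) (by omega) hh
        omega
  rcases tri_of_compl_seg h hf hY hc (by omega) (by omega) (by omega) hYc b with h1 | h1
  · exfalso
    have h2 := hf.2.2.2 2 (by omega) (by omega)
    have hp : posBool b 2 = !b := rfl
    rw [hp] at h2
    refine tri_clash (e 2) h1 h2 (by simp) (by simp) ?_
    rintro y (rfl | rfl | rfl) (hh | hh | hh)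
    any_goals first
      | rfl
      | (exfalso
         have := hf.2.1 _ _ (by omega) (by omega) (by omega) (by omega) hh
         omega)
  · exact h1

lemma even_length (h : TC M) (hf : IsFanFun M b n e) (hE : M.E.ncard = n) : n % 2 = 0 := by
  have h4 := h.four
  by_contra hodd
  have h1 := wrap_two h hf hE
  have h2 := hf.2.2.2 (n - 2) (by omega) (by omega)
  have hp : posBool b (n - 2) = b := by
    unfold posBool
    rw [if_pos (by omega)]
  have h3 : n - 2 + 1 = n - 1 := by omega
  have h5 : n - 2 + 2 = n := by omega
  rw [hp, h3, h5] at h2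
  refine tri_clash (e n) h2 h1 (by simp) (by simp) ?_
  rintro y (rfl | rfl | rfl) (hh | hh | hh)
  any_goals first
    | rfl
    | (exfalso
       have := hf.2.1 _ _ (by omega) (by omega) (by omega) (by omega) hh
       omega)

/-- A fan through all elements, repeated periodically, alternates between triangles and
triads without end. -/
lemma cyclic (h : TC M) (hf : IsFanFun M b n e) (hE : M.E.ncard = n) (k : ℕ) :
    TriOrTriad M (posBool b (k + 1))
      {e (k % n + 1), e ((k + 1) % n + 1), e ((k + 2) % n + 1)} := by
  have h4 := h.four
  have hev := even_length h hf hE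
  have hp : posBool b (k + 1) = posBool b (k % n + 1) := by
    have : (k + 1) % 2 = (k % n + 1) % 2 := by
      have h5 : k % n % 2 = k % 2 := Nat.mod_mod_of_dvd k (Nat.dvd_of_mod_eq_zero hev)
      omega
    unfold posBool
    rw [this]
  rw [hp, Nat.add_mod k 1, Nat.add_mod k 2]
  have hlt : k % n < n := Nat.mod_lt _ (by omega)
  generalize k % n = c at *
  rw [Nat.mod_eq_of_lt (by omega : 1 < n), Nat.mod_eq_of_lt (by omega : 2 < n)]
  rcases (by omega : c + 2 < n ∨ c + 2 = n ∨ c + 1 = n) with h1 | h1 | h1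
  · rw [Nat.mod_eq_of_lt (by omega), Nat.mod_eq_of_lt (by omega)]
    exact hf.2.2.2 (c + 1) (by omega) (by omega)
  · have h2 := wrap_one h hf hE
    rw [h1, Nat.mod_self, Nat.mod_eq_of_lt (by omega)]
    have h3 : n - 1 = c + 1 := by omega
    have h5 : c + 1 + 1 = n := by omega
    rw [h3] at h2
    rw [h5]
    exact h2
  · have h2 := wrap_two h hf hE
    have h3 : c + 2 = n + 1 := by omega
    rw [h3, h1, Nat.mod_self, Nat.add_mod_left, Nat.mod_eq_of_lt (by omega)]
    have hp : posBool b n = !b := by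
      unfold posBool
      rw [if_neg (by omega)]
    rw [hp]
    exact h2

end Fan

/-! ### From a cyclic fan to a wheel or whirl -/

/-- Combinatorial core. `P i` and `Q i` say that the `i`-th rim element and the `i`-th spoke
lie in a set `C`; the hypotheses say that `C` never meets `{w i, s (i+1), w (i+1)}` in exactly
one element. Walking along the rim from a spoke of `C` one stays in `C` until a spoke of `C`
is met, which yields either two spokes joined by an arc or the whole rim with at most one
spoke. -/
lemma cyclic_dichotomy {r : ℕ} [NeZero r] (P Q : ZMod r → Prop)
    (h1 : ∀ i, P i → Q (i + 1) ∨ P (i + 1)) (h2 : ∀ i, P (i + 1) → Q (i + 1) ∨ P i)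
    (h3 : ∀ i, Q (i + 1) → P i ∨ P (i + 1)) (hne : ∃ i, P i ∨ Q i) :
    (∃ i j, i ≠ j ∧ Q i ∧ Q j ∧ ∀ k ∈ cycArc r i j, P k) ∨
      ((∀ i, P i) ∧ ∀ i j, Q i → Q j → i = j) := by
  classical
  have hrep : ∀ i j : ZMod r, ∃ m : ℕ, m < r ∧ j = i + (m : ZMod r) := fun i j =>
    ⟨(j - i).val, ZMod.val_lt _, by rw [ZMod.natCast_val, ZMod.cast_id]; ring⟩
  by_cases hQ : ∃ i, Q i
  swap
  · push Not at hQ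
    right
    obtain ⟨i, hi⟩ := hne
    have hi : P i := hi.resolve_right (hQ i)
    refine ⟨fun j => ?_, fun a _ ha => absurd ha (hQ a)⟩
    obtain ⟨m, -, rfl⟩ := hrep i j
    induction m with
    | zero => simpa using hi
    | succ m ih =>
      rw [Nat.cast_succ, ← add_assoc]
      exact (h1 _ ih).resolve_left (hQ _)
  obtain ⟨i, hi⟩ := hQ
  have hr0 : 0 < r := Nat.pos_of_ne_zero (NeZero.ne r)
  -- If `i` is the only index with `Q i`, uniqueness on the right-hand side follows.
  have huniq : (∀ m : ℕ, 0 < m → m < r → ¬ Q (i + (m : ZMod r))) →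
      ∀ a b, Q a → Q b → a = b := by
    intro hm
    have : ∀ a, Q a → a = i := by
      intro a ha
      obtain ⟨m, hmr, rfl⟩ := hrep i a
      rcases Nat.eq_zero_or_pos m with rfl | hpos
      · simp
      · exact absurd ha (hm m hpos hmr)
    intro a b ha hb
    rw [this a ha, this b hb]
  have hPi : P (i - 1) ∨ P i := by
    have := h3 (i - 1)
    rw [sub_add_cancel] at this
    exact this hi
  rcases hPi with hP | hP
  · -- walk backwards from `i`
    have hex : ∃ m : ℕ, 0 < m ∧ Q (i - (m : ZMod r)) := ⟨r, hr0, by simpa using hi⟩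
    obtain ⟨hm0, hmQ⟩ := Nat.find_spec hex
    have hmin := fun k (hk : k < Nat.find hex) => Nat.find_min hex hk
    have hle : Nat.find hex ≤ r := Nat.find_min' hex ⟨hr0, by simpa using hi⟩
    generalize Nat.find hex = m at *
    have hall : ∀ k : ℕ, 0 < k → k ≤ m → P (i - (k : ZMod r)) := by
      intro k
      induction k with
      | zero => intro h; omega
      | succ k ih =>
        intro _ hk
        rcases Nat.eq_zero_or_pos k with rfl | hpos
        · simpa using hP
        · have h4 := h2 (i - ((k + 1 : ℕ) : ZMod r))
          have h5 : i - ((k + 1 : ℕ) : ZMod r) + 1 = i - (k : ZMod r) := by push_cast; ring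
          rw [h5] at h4
          exact (h4 (ih hpos (by omega))).resolve_left fun hq => hmin k (by omega) ⟨hpos, hq⟩
    rcases lt_or_eq_of_le hle with hlt | rfl
    · left
      have hv : (i - (i - (m : ZMod r))).val = m := by
        rw [sub_sub_cancel, ZMod.val_natCast_of_lt hlt]
      refine ⟨i - (m : ZMod r), i, ?_, hmQ, hi, ?_⟩
      · intro heq
        have : (i - (i - (m : ZMod r))).val = 0 := by rw [heq]; simp
        omega
      · rintro _ ⟨t, ht, rfl⟩
        rw [hv] at ht
        have := hall (m - t) (by omega) (by omega)
        rw [Nat.cast_sub (by omega)] at this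
        convert this using 1
        ring
    · right
      refine ⟨fun j => ?_, huniq fun k hk0 hkr hq => ?_⟩
      · obtain ⟨k, hk, rfl⟩ := hrep i j
        have := hall (m - k) (by omega) (by omega)
        rw [Nat.cast_sub (by omega)] at this
        simpa using this
      · apply hmin (m - k) (by omega)
        refine ⟨by omega, ?_⟩
        rw [Nat.cast_sub (by omega)]
        simpa using hq
  · -- walk forwards from `i`
    have hex : ∃ m : ℕ, 0 < m ∧ Q (i + (m : ZMod r)) := ⟨r, hr0, by simpa using hi⟩
    obtain ⟨hm0, hmQ⟩ := Nat.find_spec hex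
    have hmin := fun k (hk : k < Nat.find hex) => Nat.find_min hex hk
    have hle : Nat.find hex ≤ r := Nat.find_min' hex ⟨hr0, by simpa using hi⟩
    generalize Nat.find hex = m at *
    have hall : ∀ k : ℕ, k < m → P (i + (k : ZMod r)) := by
      intro k
      induction k with
      | zero => intro _; simpa using hP
      | succ k ih =>
        intro hk
        have h4 := h1 _ (ih (by omega))
        have h5 : i + (k : ZMod r) + 1 = i + ((k + 1 : ℕ) : ZMod r) := by push_cast; ring
        rw [h5] at h4
        exact h4.resolve_left fun hq => hmin (k + 1) hk ⟨by omega, hq⟩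
    rcases lt_or_eq_of_le hle with hlt | rfl
    · left
      have hv : (i + (m : ZMod r) - i).val = m := by
        rw [add_sub_cancel_left, ZMod.val_natCast_of_lt hlt]
      refine ⟨i, i + (m : ZMod r), ?_, hi, hmQ, ?_⟩
      · intro heq
        have : (i + (m : ZMod r) - i).val = 0 := by rw [← heq]; simp
        omega
      · rintro _ ⟨t, ht, rfl⟩
        rw [hv] at ht
        exact hall t ht
    · right
      refine ⟨fun j => ?_, huniq fun k hk0 hkr hq => hmin k hkr ⟨hk0, hq⟩⟩
      obtain ⟨k, hk, rfl⟩ := hrep i j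
      exact hall k hk

lemma right_notMem_cycArc {r : ℕ} (i j : ZMod r) : j ∉ cycArc r i j := by
  rintro ⟨m, hm, hj⟩
  have h1 : j - i = (m : ZMod r) := by rw [hj]; ring
  rw [h1] at hm
  rw [ZMod.val_natCast] at hm
  exact absurd hm (not_lt.2 (Nat.mod_le m r))

lemma left_mem_cycArc {r : ℕ} {i j : ZMod r} (h : i ≠ j) : i ∈ cycArc r i j := by
  refine ⟨0, Nat.pos_of_ne_zero fun h0 => h ?_, by simp⟩
  rw [ZMod.val_eq_zero] at h0
  exact (sub_eq_zero.1 h0).symm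

section Cycle

variable {M : Matroid α} {r : ℕ} {s w : ZMod r → α}

/-- Orthogonality with the triads, combined with the dichotomy above. -/
lemma circuit_dichotomy [NeZero r] (hE : M.E = range s ∪ range w)
    (hK : ∀ i, M.IsCocircuit {w i, s (i + 1), w (i + 1)}) {C : Set α} (hC : M.IsCircuit C) :
    (∃ i j, i ≠ j ∧ {s i, s j} ∪ w '' cycArc r i j ⊆ C) ∨
      (range w ⊆ C ∧ ∀ i j, s i ∈ C → s j ∈ C → i = j) := by
  have horth : ∀ i x, C ∩ {w i, s (i + 1), w (i + 1)} ≠ {x} := fun i x =>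
    hC.inter_isCocircuit_ne_singleton (hK i)
  have hsing : ∀ (K : Set α) x, x ∈ C → x ∈ K → (∀ y ∈ K, y ∈ C → y = x) → C ∩ K = {x} :=
    fun K x h1 h2 h3 => subset_antisymm (fun y hy => h3 y hy.2 hy.1) (by simp [h1, h2])
  have := cyclic_dichotomy (fun i => w i ∈ C) (fun i => s i ∈ C) ?_ ?_ ?_ ?_
  · rcases this with ⟨i, j, hij, hi, hj, harc⟩ | ⟨h1, h2⟩
    · refine Or.inl ⟨i, j, hij, ?_⟩
      rintro x ((rfl | rfl) | ⟨k, hk, rfl⟩)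
      · exact hi
      · exact hj
      · exact harc k hk
    · exact Or.inr ⟨range_subset_iff.2 h1, h2⟩
  · intro i hi
    by_contra! hcon
    refine horth i (w i) (hsing _ _ hi (by simp) ?_)
    rintro y (rfl | rfl | rfl) hy
    · rfl
    · exact absurd hy hcon.1
    · exact absurd hy hcon.2
  · intro i hi
    by_contra! hcon
    refine horth i (w (i + 1)) (hsing _ _ hi (by simp) ?_)
    rintro y (rfl | rfl | rfl) hy
    · exact absurd hy hcon.2
    · exact absurd hy hcon.1
    · rfl
  · intro i hi
    by_contra! hcon
    refine horth i (s (i + 1)) (hsing _ _ hi (by simp) ?_)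
    rintro y (rfl | rfl | rfl) hy
    · exact absurd hy hcon.1
    · rfl
    · exact absurd hy hcon.2
  · obtain ⟨x, hx⟩ := hC.nonempty
    have hxE := hC.subset_ground hx
    rw [hE] at hxE
    rcases hxE with ⟨i, rfl⟩ | ⟨i, rfl⟩
    · exact ⟨i, Or.inr hx⟩
    · exact ⟨i, Or.inl hx⟩

/-- Two spokes together with the rim elements of an arc between them form a circuit. -/
lemma arc_isCircuit [NeZero r] (hs : Function.Injective s) (hsw : ∀ i j, s i ≠ w j)
    (hw : Function.Injective w) (hE : M.E = range s ∪ range w)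
    (hT : ∀ i, M.IsCircuit {s i, w i, s (i + 1)})
    (hK : ∀ i, M.IsCocircuit {w i, s (i + 1), w (i + 1)}) {i j : ZMod r} (hij : i ≠ j) :
    M.IsCircuit ({s i, s j} ∪ w '' cycArc r i j) := by
  have hsE : ∀ i, s i ∈ M.E := fun i => by rw [hE]; exact Or.inl ⟨i, rfl⟩
  have hwE : ∀ i, w i ∈ M.E := fun i => by rw [hE]; exact Or.inr ⟨i, rfl⟩
  -- The triangles put every spoke along the arc into the closure of `s i` and the arc.
  have hstep : ∀ m : ℕ, m ≤ (j - i).val →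
      s (i + (m : ZMod r)) ∈ M.closure (insert (s i) (w '' cycArc r i j)) := by
    have hsub : insert (s i) (w '' cycArc r i j) ⊆ M.E := by
      rintro x (rfl | ⟨k, -, rfl⟩)
      · exact hsE i
      · exact hwE k
    intro m
    induction m with
    | zero =>
      intro _
      simp only [Nat.cast_zero, add_zero]
      exact M.subset_closure _ hsub (by simp)
    | succ m ih =>
      intro hm
      have h1 := ih (by omega)
      have h2 := (hT (i + (m : ZMod r))).mem_closure_sdiff_singleton_of_mem
        (e := s (i + (m : ZMod r) + 1)) (by simp)
      rw [Nat.cast_succ, ← add_assoc]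
      refine M.closure_subset_closure_of_subset_closure ?_ h2
      rintro x ⟨rfl | rfl | rfl, hx⟩
      · exact h1
      · exact M.subset_closure _ hsub (Or.inr ⟨_, ⟨m, by omega, rfl⟩, rfl⟩)
      · exact absurd rfl hx
  have hj : s j ∈ M.closure (insert (s i) (w '' cycArc r i j)) := by
    have := hstep _ le_rfl
    rw [ZMod.natCast_val, ZMod.cast_id] at this
    simpa using this
  have hjn : s j ∉ insert (s i) (w '' cycArc r i j) := by
    rintro (h | ⟨k, -, h⟩)
    · exact hij (hs h).symm
    · exact hsw j k h.symm
  obtain ⟨C, hCsub, hC, -⟩ := Matroid.exists_isCircuit_of_mem_closure hj hjn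
  have hCs : ∀ a, s a ∈ C → a = i ∨ a = j := by
    intro a ha
    rcases hCsub ha with h | h | ⟨k, -, h⟩
    · exact Or.inr (hs h)
    · exact Or.inl (hs h)
    · exact absurd h.symm (hsw a k)
  have hCw : w j ∉ C := by
    intro h
    rcases hCsub h with h | h | ⟨k, hk, h⟩
    · exact hsw j j h.symm
    · exact hsw i j h.symm
    · rw [hw h] at hk
      exact right_notMem_cycArc i j hk
  have heq : insert (s j) (insert (s i) (w '' cycArc r i j)) =
      {s i, s j} ∪ w '' cycArc r i j := by
    rw [insert_comm, insert_union, singleton_union]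
  rcases circuit_dichotomy hE hK hC with ⟨a, c, hac, hsub⟩ | ⟨h1, -⟩
  · have ha := hCs a (hsub (by simp))
    have hc := hCs c (hsub (by simp))
    rcases ha with rfl | rfl
    · rcases hc with rfl | rfl
      · exact absurd rfl hac
      · rw [heq] at hCsub
        rw [← subset_antisymm hCsub hsub]
        exact hC
    · exact absurd (hsub (Or.inr ⟨a, left_mem_cycArc hac, rfl⟩)) hCw
  · exact absurd (h1 ⟨j, rfl⟩) hCw

lemma wheel_or_whirl (hr : 2 ≤ r) (hinj : Function.Injective (Sum.elim s w))
    (hE : M.E = range s ∪ range w) (hT : ∀ i, M.IsCircuit {s i, w i, s (i + 1)})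
    (hK : ∀ i, M.IsCocircuit {w i, s (i + 1), w (i + 1)}) : IsWheel M ∨ IsWhirl M := by
  have : NeZero r := ⟨by omega⟩
  obtain ⟨hs, hw, hsw⟩ := Sum.elim_injective.1 hinj
  have harc : ∀ {i j : ZMod r}, i ≠ j → M.IsCircuit ({s i, s j} ∪ w '' cycArc r i j) :=
    fun hij => arc_isCircuit hs hsw hw hE hT hK hij
  have hdich : ∀ {C : Set α}, M.IsCircuit C →
      (∃ i j, i ≠ j ∧ C = {s i, s j} ∪ w '' cycArc r i j) ∨
      C = range w ∨ ∃ i, C = insert (s i) (range w) := by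
    intro C hC
    rcases circuit_dichotomy hE hK hC with ⟨i, j, hij, hsub⟩ | ⟨h1, h2⟩
    · exact Or.inl ⟨i, j, hij, (hC.eq_of_superset_isCircuit (harc hij) hsub)⟩
    · right
      by_cases hex : ∃ i, s i ∈ C
      · obtain ⟨i, hi⟩ := hex
        refine Or.inr ⟨i, subset_antisymm ?_ (insert_subset hi h1)⟩
        intro x hx
        have hxE := hC.subset_ground hx
        rw [hE] at hxE
        rcases hxE with ⟨k, rfl⟩ | hxw
        · rw [h2 k i hx hi]; exact mem_insert _ _
        · exact Or.inr hxw
      · refine Or.inl (subset_antisymm ?_ h1)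
        intro x hx
        have hxE := hC.subset_ground hx
        rw [hE] at hxE
        rcases hxE with ⟨k, rfl⟩ | hxw
        · exact absurd ⟨k, hx⟩ hex
        · exact hxw
  have hsnw : ∀ i, s i ∉ range w := by
    rintro i ⟨k, hk⟩
    exact hsw i k hk.symm
  have hwE : range w ⊆ M.E := by rw [hE]; exact subset_union_right
  have hsE : range s ⊆ M.E := by rw [hE]; exact subset_union_left
  by_cases hW : M.Indep (range w)
  · right
    refine ⟨r, hr, s, w, hinj, hE, fun C => ?_⟩
    rw [isCircuit_iff']
    constructor
    · intro hC
      rcases hdich hC with h | rfl | h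
      · exact Or.inr h
      · exact absurd hW hC.not_indep
      · exact Or.inl h
    · rintro (⟨i, rfl⟩ | ⟨i, j, hij, rfl⟩)
      · -- The spokes span `M`, so `r` bounds the rank and the rim plus a spoke is dependent.
        have hspan : M.Spanning (range s) := by
          rw [Matroid.spanning_iff_ground_subset_closure hsE]
          have h0 := M.subset_closure _ hsE
          intro x hx
          rw [hE] at hx
          rcases hx with hx | ⟨k, rfl⟩
          · exact h0 hx
          · have h2 := (hT k).mem_closure_sdiff_singleton_of_mem (e := w k) (by simp)
            refine M.closure_subset_closure ?_ h2
            rintro x ⟨rfl | rfl | rfl, hx⟩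
            · exact ⟨_, rfl⟩
            · exact absurd rfl hx
            · exact ⟨_, rfl⟩
        have hcard : ∀ f : ZMod r → α, Function.Injective f → (range f).encard = r := by
          intro f hf
          rw [← image_univ, hf.encard_image, encard_univ, ENat.card_eq_coe_fintype_card,
            ZMod.card]
        have hrank : M.eRank ≤ r := by
          rw [← hspan.eRk_eq, ← hcard s hs]
          exact M.eRk_le_encard _
        have hdep : M.Dep (insert (s i) (range w)) := by
          refine ⟨fun hI => ?_, insert_subset (hsE ⟨i, rfl⟩) hwE⟩
          have h1 := hI.encard_le_eRank.trans hrank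
          rw [encard_insert_of_notMem (hsnw i), hcard w hw] at h1
          norm_cast at h1
          omega
        obtain ⟨C, hCsub, hC⟩ := hdep.exists_isCircuit_subset
        have hCs : ∀ a, s a ∈ C → a = i := by
          intro a ha
          rcases hCsub ha with h | h
          · exact hs h
          · exact absurd h (hsnw a)
        rcases hdich hC with ⟨a, c, hac, rfl⟩ | rfl | ⟨k, rfl⟩
        · exact absurd ((hCs a (by simp)).trans (hCs c (by simp)).symm) hac
        · exact absurd hW hC.not_indep
        · rw [hCs k (by simp)] at hC
          exact hC
      · exact harc hij
  · left
    have hWC : M.IsCircuit (range w) := by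
      obtain ⟨C, hCsub, hC⟩ := Matroid.Dep.exists_isCircuit_subset ⟨hW, hwE⟩
      rcases hdich hC with ⟨a, c, hac, rfl⟩ | rfl | ⟨k, rfl⟩
      · exact absurd (hCsub (Or.inl (by simp))) (hsnw a)
      · exact hC
      · exact absurd (hCsub (by simp)) (hsnw k)
    refine ⟨r, hr, s, w, hinj, hE, fun C => ?_⟩
    rw [isCircuit_iff']
    constructor
    · intro hC
      rcases hdich hC with h | h | ⟨i, rfl⟩
      · exact Or.inr h
      · exact Or.inl h
      · have := hC.eq_of_superset_isCircuit hWC (subset_insert _ _)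
        exact absurd (this ▸ mem_insert _ _) (hsnw i)
    · rintro (rfl | ⟨i, j, hij, rfl⟩)
      · exact hWC
      · exact harc hij

end Cycle

/-- A cyclic sequence `g` of period `2r` enumerating the ground set, whose consecutive triples
are alternately triangles (at even positions) and triads, gives a wheel or a whirl: the spokes
are the even positions and the rim elements the odd ones. -/
lemma wheel_or_whirl_of_cyclic {M : Matroid α} {r : ℕ} (hr : 2 ≤ r) {g : ℕ → α}
    (hper : ∀ k l, g k = g l ↔ k % (2 * r) = l % (2 * r)) (hE : M.E = range g)
    (hT : ∀ k, M.IsCircuit {g (2 * k), g (2 * k + 1), g (2 * k + 2)})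
    (hK : ∀ k, M.IsCocircuit {g (2 * k + 1), g (2 * k + 2), g (2 * k + 3)}) :
    IsWheel M ∨ IsWhirl M := by
  have : NeZero r := ⟨by omega⟩
  have hnext : ∀ (i : ZMod r) (c : ℕ), g (2 * (i + 1).val + c) = g (2 * i.val + 2 + c) := by
    intro i c
    have hv : (i + 1).val = (i.val + 1) % r := by
      rw [ZMod.val_add, ZMod.val_one_eq_one_mod, Nat.add_mod_mod]
    rw [hper, hv, ← Nat.mul_mod_mul_left, Nat.mod_add_mod]
    congr 1
  apply wheel_or_whirl (s := fun i : ZMod r => g (2 * i.val))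
    (w := fun i : ZMod r => g (2 * i.val + 1)) hr
  · have hlt := fun i : ZMod r => ZMod.val_lt i
    have hinj : ∀ k l, k < 2 * r → l < 2 * r → g k = g l → k = l := by
      intro k l hk hl h
      rwa [hper, Nat.mod_eq_of_lt hk, Nat.mod_eq_of_lt hl] at h
    rw [Sum.elim_injective]
    refine ⟨fun i j h => ?_, fun i j h => ?_, fun i j h => ?_⟩
    · have := hinj _ _ (by have := hlt i; omega) (by have := hlt j; omega) h
      exact ZMod.val_injective r (by omega)
    · have := hinj _ _ (by have := hlt i; omega) (by have := hlt j; omega) h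
      exact ZMod.val_injective r (by omega)
    · have := hinj _ _ (by have := hlt i; omega) (by have := hlt j; omega) h
      omega
  · rw [hE]
    apply subset_antisymm
    · rintro _ ⟨k, rfl⟩
      have hk : k / 2 % r < r := Nat.mod_lt _ (by omega)
      have hv : ((k / 2 : ℕ) : ZMod r).val = k / 2 % r := ZMod.val_natCast r _
      rcases Nat.mod_two_eq_zero_or_one k with h0 | h0
      · left
        refine ⟨((k / 2 : ℕ) : ZMod r), ?_⟩
        simp only [hv]
        rw [hper, ← Nat.mul_mod_mul_left, Nat.mod_mod]
        congr 1
        omega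
      · right
        refine ⟨((k / 2 : ℕ) : ZMod r), ?_⟩
        simp only [hv]
        rw [hper, ← Nat.mul_mod_mul_left, Nat.mod_add_mod]
        congr 1
        omega
    · rintro _ (⟨i, rfl⟩ | ⟨i, rfl⟩) <;> exact ⟨_, rfl⟩
  · intro i
    have h0 := hnext i 0
    simp only [add_zero] at h0
    simp only [h0]
    exact hT _
  · intro i
    have h0 := hnext i 0
    simp only [add_zero] at h0
    simp only [h0, hnext i 1]
    exact hK _

end FanProof

/-- A 3-connected matroid with at least four elements that has a fan containing all
but at most one of its elements is a wheel or a whirl. -/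
theorem statement11 (M : Matroid α) (hM3 : ThreeConn M) (b : Bool) (n : ℕ) (e : ℕ → α)
    (hfan : IsFanFun M b n e) (h4 : 4 ≤ M.E.encard)
    (hle : M.E.encard ≤ (n : ℕ∞) + 1) :
    IsWheel M ∨ IsWhirl M := by
  have hfin : M.E.Finite :=
    finite_of_encard_le_coe (k := n + 1) (by exact_mod_cast hle)
  rw [← hfin.cast_ncard_eq] at h4 hle
  have h4' : 4 ≤ M.E.ncard := by exact_mod_cast h4
  have hle' : M.E.ncard ≤ n + 1 := by exact_mod_cast hle
  have hTC := FanProof.TC.of_threeConn hM3 hfin h4'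
  have hge : n ≤ M.E.ncard := by
    have h1 := ncard_le_ncard (FanProof.seg_subset hfan (i := 1) le_rfl le_rfl) hfin
    rw [FanProof.ncard_seg hfan le_rfl le_rfl] at h1
    omega
  -- If one element is missed, append it: the fan may be assumed to exhaust the ground set.
  obtain ⟨n, e, hfan, hn⟩ : ∃ n e, IsFanFun M b n e ∧ M.E.ncard = n := by
    rcases (by omega : M.E.ncard = n ∨ M.E.ncard = n + 1) with h | h
    · exact ⟨n, e, hfan, h⟩
    · obtain ⟨e', he'⟩ := FanProof.exists_extend hTC hfan h
      exact ⟨n + 1, e', he', h⟩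
  obtain ⟨r, rfl⟩ : ∃ r, n = 2 * r :=
    ⟨n / 2, by have := FanProof.even_length hTC hfan hn; omega⟩
  have hcyc := FanProof.cyclic hTC hfan hn
  have hlt : ∀ k, k % (2 * r) < 2 * r := fun k => Nat.mod_lt _ (by omega)
  have hper : ∀ k l, e (k % (2 * r) + 1) = e (l % (2 * r) + 1) ↔
      k % (2 * r) = l % (2 * r) := by
    intro k l
    refine ⟨fun h => ?_, fun h => by rw [h]⟩
    have hk := hlt k
    have hl := hlt l
    have := hfan.2.1 _ _ (by omega) (by omega) (by omega) (by omega) h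
    omega
  -- If the first triple is a triad, start one position later.
  obtain ⟨c, hc⟩ : ∃ c, ∀ k, posBool b (2 * k + c + 1) = true := by
    cases b
    · exact ⟨1, fun k => by simp [posBool]; omega⟩
    · exact ⟨0, fun k => by simp [posBool]⟩
  apply FanProof.wheel_or_whirl_of_cyclic (r := r) (by omega)
    (g := fun k => e ((k + c) % (2 * r) + 1))
  · intro k l
    rw [hper]
    exact Nat.ModEq.add_iff_right rfl
  · rw [FanProof.ground_eq_seg hTC hfan hn]
    apply subset_antisymm
    · rintro _ ⟨k, ⟨hk1, hk2⟩, rfl⟩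
      -- Going `2 * r * c - c` steps further undoes the shift by `c` modulo `2 * r`.
      refine ⟨k - 1 + (2 * r * c - c), ?_⟩
      have h1 : c ≤ 2 * r * c := Nat.le_mul_of_pos_left c (by omega)
      have h2 : k - 1 + (2 * r * c - c) + c = k - 1 + 2 * r * c := by omega
      simp only [h2]
      rw [Nat.add_mul_mod_self_left, Nat.mod_eq_of_lt (by omega)]
      congr 1
      omega
    · rintro _ ⟨k, rfl⟩
      have := hlt (k + c)
      exact ⟨_, ⟨by omega, by omega⟩, rfl⟩
  · intro k
    have h1 := hcyc (2 * k + c)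
    rw [hc, FanProof.tri_iff] at h1
    have i1 : 2 * k + 1 + c = 2 * k + c + 1 := by ring
    have i2 : 2 * k + 2 + c = 2 * k + c + 2 := by ring
    simp only [i1, i2]
    exact h1.1
  · intro k
    have h1 := hcyc (2 * k + c + 1)
    rw [FanProof.posBool_succ, hc, FanProof.tri_iff] at h1
    have i1 : 2 * k + 1 + c = 2 * k + c + 1 := by ring
    have i2 : 2 * k + 2 + c = 2 * k + c + 1 + 1 := by ring
    have i3 : 2 * k + 3 + c = 2 * k + c + 1 + 2 := by ring
    simp only [i1, i2, i3]
    exact h1.1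
end
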